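/- arXiv:2102.02778 — 2 statements merged into one kernel-verified Lean document; each statement's English description precedes it below -/
import Mathlib

section
/- Let X be an infinite-dimensional Banach space that contains uniformly complemented (ℓ₂ⁿ)_{n=1}^∞, i.e. there are a constant C ≥ 1 and a sequence (F_n)_{n=1}^∞ of subspaces of X such that, for each n, F_n is C-isomorphic to ℓ₂ⁿ and C-complemented in X. Then for every k ≥ 2 the space P₀ᵏ(X) of polynomials of degree at most k on X vanishing at 0 is not complemented in Lip₀(B_X). -/
open Metric Set Real

noncomputable section

/-- The closed unit ball of a normed space, as a pointed metric space. -/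
def UBall (X : Type*) [NormedAddCommGroup X] : Set X := Metric.closedBall (0 : X) 1

/-- The base point of the unit ball. -/
def zeroB (X : Type*) [NormedAddCommGroup X] : ↥(UBall X) :=
  ⟨0, Metric.mem_closedBall_self zero_le_one⟩

/-- `Lip₀(B_X)`: real-valued Lipschitz functions on the closed unit ball vanishing at `0`. -/
def Lip0B (X : Type*) [NormedAddCommGroup X] : Set (↥(UBall X) → ℝ) :=
  {f | (∃ K : NNReal, LipschitzWith K f) ∧ f (zeroB X) = 0}

/-- The image of the space `P(ᵏX)` of `k`-homogeneous polynomials on `X` inside the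
functions on the unit ball, via the restriction embedding `P ↦ P↾_{B_X}`. -/
def PhomB (k : ℕ) (X : Type*) [NormedAddCommGroup X] [NormedSpace ℝ X] :
    Set (↥(UBall X) → ℝ) :=
  {f | ∃ M : ContinuousMultilinearMap ℝ (fun _ : Fin k => X) ℝ,
    ∀ x : ↥(UBall X), f x = M (fun _ => (x : X))}

/-- `C₀¹(B_E)`: functions on the closed unit ball that are continuous on the closed ball,
continuously differentiable on the open ball with uniformly continuous derivative,
and vanish at `0`. -/
def C01B (E : Type*) [NormedAddCommGroup E] [NormedSpace ℝ E] :
    Set (↥(UBall E) → ℝ) :=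
  {f | ∃ g : E → ℝ,
    (∀ x : ↥(UBall E), f x = g x) ∧
    ContinuousOn g (UBall E) ∧ g 0 = 0 ∧
    ∃ g' : E → (E →L[ℝ] ℝ),
      (∀ x ∈ Metric.ball (0 : E) 1, HasFDerivAt g (g' x) x) ∧
      UniformContinuousOn g' (Metric.ball (0 : E) 1)}

/-- The image of the space `P₀ᵏ(X)` of polynomials of degree at most `k` vanishing at `0`
inside the functions on the unit ball, via the restriction embedding. -/
def PdegB (k : ℕ) (X : Type*) [NormedAddCommGroup X] [NormedSpace ℝ X] :
    Set (↥(UBall X) → ℝ) :=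
  {f | ∃ P : (j : ℕ) → ContinuousMultilinearMap ℝ (fun _ : Fin j => X) ℝ,
    ∀ x : ↥(UBall X), f x = ∑ j ∈ Finset.Icc 1 k, P j (fun _ => (x : X))}

/-! If `P₀ᵏ(X)` is complemented, composing the projection with the extraction of the degree-two
part gives a bounded operator `R` from Lipschitz functions on the ball to quadratic forms which
fixes the squares of functionals. Since the identity of `ℓ₂ⁿ` factors through `X` uniformly in `n`,
such an operator exists on each `ℓ₂ⁿ` with a bound independent of `n`.

On `ℓ₂ⁿ` let `τ` truncate at height `d`. For signs `s`, the functions `(∑ sᵢxᵢ)²` and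
`(∑ sᵢτ(xᵢ))² = ∑ sᵢsⱼτ(xᵢ)τ(xⱼ)` differ by a function of Lipschitz constant `O(√n / d)`, so `R`
takes nearby values on them at `n^(-1/2) s`, where `R` of the first equals `n`. But
`qᵢⱼ = R(τ(xᵢ)τ(xⱼ))` has norm `O(d)` because `τ(xᵢ)τ(xⱼ)` is `2d`-Lipschitz, and averaging
`sᵢsⱼqᵢⱼ(∑ sₖeₖ)` over the signs only leaves the polar form at `(eᵢ, eⱼ)`; so for some `s` the
second is `O(dn)`. With `d = n^(-1/4)` this bounds `n`. -/

section Lipschitz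

theorem lipschitzWith_mul_of_abs_le {α : Type*} [PseudoMetricSpace α] {f g : α → ℝ}
    {Kf Kg Bf Bg : NNReal} (hf : LipschitzWith Kf f) (hg : LipschitzWith Kg g)
    (hfB : ∀ x, |f x| ≤ Bf) (hgB : ∀ x, |g x| ≤ Bg) :
    LipschitzWith (Bf * Kg + Bg * Kf) fun x ↦ f x * g x := by
  refine .of_dist_le_mul fun x y ↦ ?_
  have hfxy : |f x - f y| ≤ Kf * dist x y := hf.dist_le_mul x y
  have hgxy : |g x - g y| ≤ Kg * dist x y := hg.dist_le_mul x y
  calc |f x * g x - f y * g y| = |f x * (g x - g y) + g y * (f x - f y)| := by ring_nf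
    _ ≤ |f x| * |g x - g y| + |g y| * |f x - f y| := by
      simpa only [abs_mul] using abs_add_le (f x * (g x - g y)) (g y * (f x - f y))
    _ ≤ Bf * (Kg * dist x y) + Bg * (Kf * dist x y) := by
      gcongr
      exacts [hfB x, hgB y]
    _ = ↑(Bf * Kg + Bg * Kf) * dist x y := by push_cast; ring

/-- The truncation of a real number at height `d`, i.e. its projection onto `[-d, d]` if `0 ≤ d`. -/
def truncate (d t : ℝ) : ℝ := max (-d) (min d t)

theorem lipschitzWith_truncate (d : ℝ) : LipschitzWith 1 (truncate d) :=
  (LipschitzWith.id.const_min d).const_max (-d)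

theorem truncate_mono (d : ℝ) : Monotone (truncate d) := fun _ _ h ↦
  max_le_max_left _ (min_le_min_left _ h)

theorem abs_truncate_le {d : ℝ} (hd : 0 ≤ d) (t : ℝ) : |truncate d t| ≤ d :=
  abs_le.2 ⟨le_max_left _ _, max_le (by linarith) (min_le_left _ _)⟩

theorem truncate_of_abs_le {d t : ℝ} (h : |t| ≤ d) : truncate d t = t := by
  rw [truncate, min_eq_right (abs_le.1 h).2, max_eq_right (abs_le.1 h).1]

theorem abs_sub_truncate_sub_le_abs_sub (d a b : ℝ) :
    |(a - truncate d a) - (b - truncate d b)| ≤ |a - b| := by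
  wlog hab : b ≤ a generalizing a b
  · simpa only [abs_sub_comm] using this b a (le_of_not_ge hab)
  have hmono := truncate_mono d hab
  have hlip : |truncate d a - truncate d b| ≤ |a - b| := by
    simpa [Real.dist_eq] using (lipschitzWith_truncate d).dist_le_mul a b
  rw [abs_of_nonneg (sub_nonneg.2 hab), abs_le] at hlip ⊢
  constructor <;> linarith

/-- The left-hand side vanishes unless `d ≤ |a| + |b|`. -/
theorem abs_sub_truncate_sub_le {d : ℝ} (hd : 0 < d) (a b : ℝ) :
    |(a - truncate d a) - (b - truncate d b)| ≤ |a - b| * (|a| + |b|) / d := by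
  by_cases h : |a| ≤ d ∧ |b| ≤ d
  · rw [truncate_of_abs_le h.1, truncate_of_abs_le h.2, sub_self, sub_self, sub_self, abs_zero]
    positivity
  · have hle : d ≤ |a| + |b| := by
      contrapose! h
      exact ⟨by linarith [abs_nonneg b], by linarith [abs_nonneg a]⟩
    rw [mul_div_assoc]
    exact (abs_sub_truncate_sub_le_abs_sub d a b).trans
      (le_mul_of_one_le_right (abs_nonneg _) ((one_le_div hd).2 hle))

end Lipschitz

section UnitBall

variable {X Y : Type*} [NormedAddCommGroup X] [NormedAddCommGroup Y]

theorem mem_unitBall {x : X} : x ∈ UBall X ↔ ‖x‖ ≤ 1 := mem_closedBall_zero_iff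

theorem abs_le_of_lipschitzWith_unitBall {f : UBall X → ℝ} {K : NNReal} (hf : LipschitzWith K f)
    (h0 : f (zeroB X) = 0) (x : UBall X) : |f x| ≤ K := by
  have hx : dist x (zeroB X) ≤ 1 := x.2
  simpa [h0] using hf.dist_le_mul_of_le hx

variable [NormedSpace ℝ X] [NormedSpace ℝ Y]

/-- The map between unit balls induced by a linear contraction. -/
def unitBallMap (S : X →L[ℝ] Y) (hS : ‖S‖ ≤ 1) (x : UBall X) : UBall Y :=
  ⟨S x, mem_unitBall.2 <| (S.le_opNorm x).trans <|
    mul_le_one₀ hS (norm_nonneg _) (mem_unitBall.1 x.2)⟩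

theorem unitBallMap_zeroB (S : X →L[ℝ] Y) (hS : ‖S‖ ≤ 1) :
    unitBallMap S hS (zeroB X) = zeroB Y :=
  Subtype.ext (map_zero S)

theorem lipschitzWith_unitBallMap (S : X →L[ℝ] Y) (hS : ‖S‖ ≤ 1) :
    LipschitzWith 1 (unitBallMap S hS) :=
  .mk_one fun x y ↦ by
    simpa [Subtype.dist_eq, dist_eq_norm, unitBallMap] using
      S.le_of_opNorm_le hS (x.1 - y.1)

theorem comp_unitBallMap_mem_lip0B {f : UBall Y → ℝ} (hf : f ∈ Lip0B Y) (S : X →L[ℝ] Y)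
    (hS : ‖S‖ ≤ 1) : f ∘ unitBallMap S hS ∈ Lip0B X := by
  obtain ⟨⟨K, hK⟩, hf0⟩ := hf
  exact ⟨⟨_, hK.comp (lipschitzWith_unitBallMap S hS)⟩, by
    rw [Function.comp_apply, unitBallMap_zeroB, hf0]⟩

end UnitBall

section QuadraticForm

theorem abs_quadraticForm_le_of_unitBall {X : Type*} [NormedAddCommGroup X] [NormedSpace ℝ X]
    {q : QuadraticForm ℝ X} {B : ℝ} (hq : ∀ x : UBall X, |q x| ≤ B) (x : X) :
    |q x| ≤ B * ‖x‖ ^ 2 := by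
  obtain rfl | hx := eq_or_ne x 0
  · simp
  have hx' : 0 < ‖x‖ := norm_pos_iff.2 hx
  have hqx : q (‖x‖⁻¹ • x) = q x / ‖x‖ ^ 2 := by
    rw [QuadraticMap.map_smul, smul_eq_mul]
    field_simp
  have hle := hq ⟨_, inv_norm_smul_mem_unitClosedBall x⟩
  rwa [hqx, abs_div, abs_of_pos (pow_pos hx' 2), div_le_iff₀ (pow_pos hx' 2)] at hle

theorem abs_polar_le {E : Type*} [NormedAddCommGroup E] [InnerProductSpace ℝ E]
    {q : QuadraticForm ℝ E} {B : ℝ} (hq : ∀ x, |q x| ≤ B * ‖x‖ ^ 2) (x y : E) :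
    |QuadraticMap.polar q x y| ≤ B * (‖x‖ ^ 2 + ‖y‖ ^ 2) := by
  have hpolar : 2 * QuadraticMap.polar q x y = q (x + y) - q (x - y) := by
    have hsub := QuadraticMap.map_add q x (-y)
    rw [← sub_eq_add_neg, QuadraticMap.map_neg, QuadraticMap.polar_neg_right] at hsub
    rw [hsub, QuadraticMap.map_add q x y]
    ring
  have hpar : B * ‖x + y‖ ^ 2 + B * ‖x - y‖ ^ 2 = 2 * (B * (‖x‖ ^ 2 + ‖y‖ ^ 2)) := by
    linear_combination B * parallelogram_law_with_norm ℝ x y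
  have hadd := abs_le.1 (hq (x + y))
  have hsub := abs_le.1 (hq (x - y))
  rw [abs_le]
  constructor <;> linarith

theorem exists_quadraticForm_eq_multilinear {X : Type*} [NormedAddCommGroup X] [NormedSpace ℝ X]
    (M : ContinuousMultilinearMap ℝ (fun _ : Fin 2 ↦ X) ℝ) :
    ∃ q : QuadraticForm ℝ X, ∀ x, q x = M fun _ ↦ x := by
  let B : LinearMap.BilinMap ℝ X ℝ :=
    (MultilinearMap.ofSubsingletonₗ ℝ ℝ X ℝ (0 : Fin 1)).symm.toLinearMap ∘ₗ
      M.toMultilinearMap.curryLeft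
  refine ⟨B.toQuadraticMap, fun x ↦ ?_⟩
  change M (Fin.cons x fun _ ↦ x) = M fun _ ↦ x
  congr 1
  ext i
  cases i using Fin.cases <;> rfl

end QuadraticForm

section Signs

variable {ι : Type*}

/-- A choice of signs, as a real vector. Choices of signs are encoded by `ι → ℤˣ` because flipping
a sign is then a multiplication. -/
def signVec (s : ι → ℤˣ) (i : ι) : ℝ := ((s i : ℤ) : ℝ)

theorem signVec_mul_self (s : ι → ℤˣ) (i : ι) : signVec s i * signVec s i = 1 := by
  simp only [signVec]
  exact_mod_cast Int.units_coe_mul_self (s i)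

theorem abs_signVec (s : ι → ℤˣ) (i : ι) : |signVec s i| = 1 :=
  (mul_self_eq_one_iff.1 (by rw [abs_mul_abs_self, signVec_mul_self])).resolve_right
    fun h ↦ by linarith [abs_nonneg (signVec s i)]

theorem norm_sq_toLp_signVec [Fintype ι] (s : ι → ℤˣ) :
    ‖WithLp.toLp 2 (signVec s)‖ ^ 2 = Fintype.card ι := by
  rw [EuclideanSpace.real_norm_sq_eq]
  simp [pow_two, signVec_mul_self]

theorem inv_sqrt_card_smul_signVec_mem_unitBall [Fintype ι] (s : ι → ℤˣ) :
    (√(Fintype.card ι))⁻¹ • WithLp.toLp 2 (signVec s) ∈ UBall (EuclideanSpace ℝ ι) := by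
  have hnorm : ‖WithLp.toLp 2 (signVec s)‖ = √(Fintype.card ι) := by
    rw [← norm_sq_toLp_signVec s, Real.sqrt_sq (norm_nonneg _)]
  rw [mem_unitBall, norm_smul, hnorm, norm_inv, Real.norm_of_nonneg (Real.sqrt_nonneg _)]
  exact inv_mul_le_one

theorem signVec_flip [DecidableEq ι] (s : ι → ℤˣ) (i : ι) :
    signVec (Pi.mulSingle i (-1) * s) = signVec s - Pi.single i (2 * signVec s i) := by
  ext j
  obtain rfl | hij := eq_or_ne j i
  · simp only [signVec, Pi.mul_apply, Pi.mulSingle_eq_same, Pi.sub_apply, Pi.single_eq_same]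
    push_cast
    ring
  · simp [signVec, hij]

variable [Fintype ι]

theorem sum_comp_flip [DecidableEq ι] {M : Type*} [AddCommMonoid M] (i : ι) (F : (ι → ℤˣ) → M) :
    ∑ s : ι → ℤˣ, F (Pi.mulSingle i (-1) * s) = ∑ s, F s :=
  Equiv.sum_comp (Equiv.mulLeft (Pi.mulSingle i (-1) : ι → ℤˣ)) F

theorem sum_signVec_mul_signVec [DecidableEq ι] (i j : ι) :
    ∑ s : ι → ℤˣ, signVec s i * signVec s j =
      if i = j then (Fintype.card (ι → ℤˣ) : ℝ) else 0 := by
  split_ifs with hij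
  · simp only [hij, signVec_mul_self, Finset.sum_const, nsmul_eq_mul, mul_one, Finset.card_univ]
  · have hneg := sum_comp_flip i fun s ↦ signVec s i * signVec s j
    simp only [signVec_flip, Pi.sub_apply, Pi.single_eq_same, Pi.single_eq_of_ne' hij] at hneg
    have : ∀ s : ι → ℤˣ, (signVec s i - 2 * signVec s i) * (signVec s j - 0) =
      -(signVec s i * signVec s j) := fun s ↦ by ring
    simp only [this, Finset.sum_neg_distrib] at hneg
    linarith

/-- Flipping the `i`-th sign moves `∑ₖ sₖvₖ` along `vᵢ`, so that only second moments of the signs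
are needed. -/
theorem sum_signVec_mul_quadraticForm [DecidableEq ι] {M : Type*} [AddCommGroup M] [Module ℝ M]
    (q : QuadraticForm ℝ M) (v : ι → M) {i j : ι} (hij : i ≠ j) :
    ∑ s : ι → ℤˣ, signVec s i * signVec s j * q (∑ k, signVec s k • v k) =
      Fintype.card (ι → ℤˣ) * QuadraticMap.polar q (v i) (v j) := by
  set Z : (ι → ℤˣ) → M := fun s ↦ ∑ k, signVec s k • v k with hZ
  set F : (ι → ℤˣ) → ℝ := fun s ↦ signVec s i * signVec s j * q (Z s) with hF
  have hZ_flip (s) : Z (Pi.mulSingle i (-1) * s) = Z s + (-2 * signVec s i) • v i := by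
    simp only [hZ, signVec_flip, Pi.sub_apply, sub_smul, Finset.sum_sub_distrib, Pi.single_apply,
      ite_smul, zero_smul, Finset.sum_ite_eq', Finset.mem_univ, if_true, neg_mul, neg_smul,
      ← sub_eq_add_neg]
  have hF_flip (s) : F s + F (Pi.mulSingle i (-1) * s) =
      2 * ∑ k, signVec s j * signVec s k * QuadraticMap.polar q (v k) (v i)
        - 4 * q (v i) * (signVec s i * signVec s j) := by
    have hpolar : ∑ k, signVec s j * signVec s k * QuadraticMap.polar q (v k) (v i) =
        signVec s j * QuadraticMap.polar q (Z s) (v i) := by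
      rw [← QuadraticMap.polarBilin_apply_apply, hZ, map_sum, LinearMap.sum_apply, Finset.mul_sum]
      simp [mul_assoc]
    have hadd := QuadraticMap.map_add q (Z s) ((-2 * signVec s i) • v i)
    rw [hpolar]
    simp only [hF, hZ_flip, hadd, QuadraticMap.map_smul, QuadraticMap.polar_smul_right,
      signVec_flip, Pi.sub_apply, Pi.single_eq_same, Pi.single_eq_of_ne' hij, smul_eq_mul]
    linear_combination (2 * signVec s j * QuadraticMap.polar q (Z s) (v i)
      - 4 * signVec s i * signVec s j * q (v i)) * signVec_mul_self s i
  have htwice : 2 * ∑ s, F s =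
      2 * (Fintype.card (ι → ℤˣ) * QuadraticMap.polar q (v j) (v i)) := by
    calc 2 * ∑ s, F s = ∑ s, (F s + F (Pi.mulSingle i (-1) * s)) := by
          rw [Finset.sum_add_distrib, sum_comp_flip i F, two_mul]
      _ = 2 * ∑ k, (∑ s, signVec s j * signVec s k) * QuadraticMap.polar q (v k) (v i)
            - 4 * q (v i) * ∑ s, signVec s i * signVec s j := by
          simp only [hF_flip, Finset.sum_sub_distrib, ← Finset.mul_sum, Finset.sum_mul]
          rw [Finset.sum_comm]
      _ = _ := by simp [sum_signVec_mul_signVec, hij]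
  rw [QuadraticMap.polar_comm]
  linarith

theorem sum_signVec_mul_quadraticForm_euclidean_le [DecidableEq ι]
    {q : QuadraticForm ℝ (EuclideanSpace ℝ ι)} {B : NNReal} (hq : ∀ x, |q x| ≤ B * ‖x‖ ^ 2)
    (i j : ι) :
    ∑ s : ι → ℤˣ, signVec s i * signVec s j * q (WithLp.toLp 2 (signVec s)) ≤
      Fintype.card (ι → ℤˣ) * (2 * B + if i = j then (B * Fintype.card ι : ℝ) else 0) := by
  split_ifs with hij
  · have hterm (s : ι → ℤˣ) : signVec s i * signVec s j * q (WithLp.toLp 2 (signVec s)) ≤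
        2 * B + B * Fintype.card ι := by
      rw [hij, signVec_mul_self, one_mul, ← norm_sq_toLp_signVec s]
      exact (le_abs_self _).trans ((hq _).trans (by simp))
    simpa only [nsmul_eq_mul, Finset.card_univ] using
      Finset.sum_le_card_nsmul Finset.univ _ _ fun s _ ↦ hterm s
  · have hexpand (s : ι → ℤˣ) : WithLp.toLp 2 (signVec s) =
        ∑ k, signVec s k • EuclideanSpace.single k (1 : ℝ) := by
      ext k
      simp [Finset.sum_apply, Pi.single_apply]
    have hpolar := abs_polar_le hq (EuclideanSpace.single i 1) (EuclideanSpace.single j 1)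
    simp only [PiLp.norm_single, norm_one, one_pow] at hpolar
    simp only [hexpand, sum_signVec_mul_quadraticForm q _ hij]
    gcongr
    linarith [le_abs_self (QuadraticMap.polar q (EuclideanSpace.single i 1)
      (EuclideanSpace.single j 1))]

theorem exists_signVec_sum_le (q : ι → ι → QuadraticForm ℝ (EuclideanSpace ℝ ι)) {B : NNReal}
    (hq : ∀ i j x, |q i j x| ≤ B * ‖x‖ ^ 2) :
    ∃ s : ι → ℤˣ, ∑ i, ∑ j, signVec s i * signVec s j * q i j (WithLp.toLp 2 (signVec s)) ≤
      3 * B * Fintype.card ι ^ 2 := by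
  classical
  suffices h : ∑ s : ι → ℤˣ,
      ∑ i, ∑ j, signVec s i * signVec s j * q i j (WithLp.toLp 2 (signVec s)) ≤
        ∑ _s : ι → ℤˣ, 3 * B * (Fintype.card ι : ℝ) ^ 2 by
    obtain ⟨s, -, hs⟩ := Finset.exists_le_of_sum_le Finset.univ_nonempty h
    exact ⟨s, hs⟩
  calc _ = ∑ i, ∑ j, ∑ s : ι → ℤˣ,
          signVec s i * signVec s j * q i j (WithLp.toLp 2 (signVec s)) := by
        rw [Finset.sum_comm]
        exact Finset.sum_congr rfl fun i _ ↦ Finset.sum_comm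
    _ ≤ ∑ i : ι, ∑ j : ι, Fintype.card (ι → ℤˣ) *
          (2 * B + if i = j then (B * Fintype.card ι : ℝ) else 0) := by
        gcongr with i _ j _
        exact sum_signVec_mul_quadraticForm_euclidean_le (hq i j) i j
    _ = ∑ _s : ι → ℤˣ, 3 * B * (Fintype.card ι : ℝ) ^ 2 := by
        simp only [← Finset.mul_sum, Finset.sum_add_distrib, Finset.sum_ite_eq, Finset.mem_univ,
          if_true, Finset.sum_const, Finset.card_univ, nsmul_eq_mul]
        ring

end Signs

section Truncation

variable {ι : Type*} [Fintype ι]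

theorem sum_abs_mul_abs_le_norm_mul_norm (x y : EuclideanSpace ℝ ι) :
    ∑ i, |x i| * |y i| ≤ ‖x‖ * ‖y‖ := by
  simpa [EuclideanSpace.norm_eq] using
    Real.sum_mul_le_sqrt_mul_sqrt Finset.univ (fun i ↦ |x i|) fun i ↦ |y i|

theorem sum_abs_le_sqrt_card_mul_norm (x : EuclideanSpace ℝ ι) :
    ∑ i, |x i| ≤ √(Fintype.card ι) * ‖x‖ := by
  simpa [EuclideanSpace.norm_eq] using
    Real.sum_mul_le_sqrt_mul_sqrt Finset.univ (fun _ ↦ (1 : ℝ)) fun i ↦ |x i|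

theorem lipschitzWith_sum_mul_comp_coord {σ : ι → ℝ} (hσ : ∀ i, |σ i| ≤ 1) {g : ℝ → ℝ}
    {K : NNReal} (hg : LipschitzWith K g) :
    LipschitzWith (K * NNReal.sqrt (Fintype.card ι))
      fun x : EuclideanSpace ℝ ι ↦ ∑ i, σ i * g (x i) := by
  refine .of_dist_le_mul fun x y ↦ ?_
  calc |∑ i, σ i * g (x i) - ∑ i, σ i * g (y i)| = |∑ i, σ i * (g (x i) - g (y i))| := by
        simp only [mul_sub, Finset.sum_sub_distrib]
    _ ≤ ∑ i, |σ i * (g (x i) - g (y i))| := Finset.abs_sum_le_sum_abs _ _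
    _ ≤ ∑ i, K * |(x - y) i| := by
        gcongr with i
        rw [abs_mul]
        exact (mul_le_of_le_one_left (abs_nonneg _) (hσ i)).trans (hg.dist_le_mul _ _)
    _ ≤ K * (√(Fintype.card ι) * ‖x - y‖) := by
        rw [← Finset.mul_sum]
        gcongr
        exact sum_abs_le_sqrt_card_mul_norm _
    _ = ↑(K * NNReal.sqrt (Fintype.card ι)) * dist x y := by
        rw [dist_eq_norm]
        push_cast
        ring

theorem lipschitzWith_sum_mul_sub_truncate {σ : ι → ℝ} (hσ : ∀ i, |σ i| ≤ 1) {d : NNReal}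
    (hd : 0 < d) :
    LipschitzWith (2 / d)
      fun x : UBall (EuclideanSpace ℝ ι) ↦ ∑ i, σ i * (x.1 i - truncate d (x.1 i)) := by
  refine .of_dist_le_mul fun ⟨x, hx⟩ ⟨y, hy⟩ ↦ ?_
  rw [mem_unitBall] at hx hy
  calc |∑ i, σ i * (x i - truncate d (x i)) - ∑ i, σ i * (y i - truncate d (y i))|
      = |∑ i, σ i * ((x i - truncate d (x i)) - (y i - truncate d (y i)))| := by
        simp only [mul_sub, Finset.sum_sub_distrib]
    _ ≤ ∑ i, |σ i * ((x i - truncate d (x i)) - (y i - truncate d (y i)))| :=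
        Finset.abs_sum_le_sum_abs _ _
    _ ≤ ∑ i, (|(x - y) i| * |x i| + |(x - y) i| * |y i|) / d := by
        gcongr with i
        rw [abs_mul, ← mul_add]
        exact (mul_le_of_le_one_left (abs_nonneg _) (hσ i)).trans
          (abs_sub_truncate_sub_le (NNReal.coe_pos.2 hd) _ _)
    _ ≤ (‖x - y‖ * ‖x‖ + ‖x - y‖ * ‖y‖) / d := by
        rw [← Finset.sum_div, Finset.sum_add_distrib]
        gcongr <;> exact sum_abs_mul_abs_le_norm_mul_norm _ _
    _ ≤ (‖x - y‖ * 1 + ‖x - y‖ * 1) / d := by gcongr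
    _ = ↑(2 / d) * dist x y := by
        rw [dist_eq_norm]
        push_cast
        ring

theorem lipschitzWith_sq_sub_sq_truncate {σ : ι → ℝ} (hσ : ∀ i, |σ i| ≤ 1) {d : NNReal}
    (hd : 0 < d) :
    LipschitzWith (8 * NNReal.sqrt (Fintype.card ι) / d)
      fun x : UBall (EuclideanSpace ℝ ι) ↦
        (∑ i, σ i * x.1 i) ^ 2 - (∑ i, σ i * truncate d (x.1 i)) ^ 2 := by
  have htrunc : truncate d 0 = 0 := truncate_of_abs_le (by simp)
  have hsum : LipschitzWith (2 * NNReal.sqrt (Fintype.card ι))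
      fun x : UBall (EuclideanSpace ℝ ι) ↦ ∑ i, σ i * (x.1 i + truncate d (x.1 i)) := by
    have hg : LipschitzWith 2 fun t ↦ t + truncate d t :=
      (LipschitzWith.id.add (lipschitzWith_truncate d)).weaken one_add_one_eq_two.le
    simpa [Function.comp_def] using
      (lipschitzWith_sum_mul_comp_coord hσ hg).comp (.subtype_val (UBall (EuclideanSpace ℝ ι)))
  have hdiff := lipschitzWith_sum_mul_sub_truncate hσ hd
  have hprod := lipschitzWith_mul_of_abs_le hsum hdiff
    (abs_le_of_lipschitzWith_unitBall hsum (by simp [zeroB, htrunc]))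
    (abs_le_of_lipschitzWith_unitBall hdiff (by simp [zeroB, htrunc]))
  have hfactor : (fun x : UBall (EuclideanSpace ℝ ι) ↦
      (∑ i, σ i * x.1 i) ^ 2 - (∑ i, σ i * truncate d (x.1 i)) ^ 2) = fun x ↦
        (∑ i, σ i * (x.1 i + truncate d (x.1 i))) * ∑ i, σ i * (x.1 i - truncate d (x.1 i)) := by
    ext x
    simp only [mul_add, mul_sub, Finset.sum_add_distrib, Finset.sum_sub_distrib]
    ring
  rw [hfactor]
  exact hprod.weaken (le_of_eq (by ring))

theorem lipschitzWith_truncate_mul_truncate (d : NNReal) (i j : ι) :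
    LipschitzWith (2 * d)
      fun x : UBall (EuclideanSpace ℝ ι) ↦ truncate d (x.1 i) * truncate d (x.1 j) := by
  have hcoord (k : ι) :
      LipschitzWith 1 fun x : UBall (EuclideanSpace ℝ ι) ↦ truncate d (x.1 k) := by
    refine .mk_one fun x y ↦ ((lipschitzWith_truncate d).dist_le_mul _ _).trans ?_
    simpa [Subtype.dist_eq, dist_eq_norm] using PiLp.norm_apply_le (x.1 - y.1) k
  have hbound (k : ι) (x : UBall (EuclideanSpace ℝ ι)) : |truncate d (x.1 k)| ≤ d :=
    abs_truncate_le d.2 _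
  exact (lipschitzWith_mul_of_abs_le (hcoord i) (hcoord j) (hbound i) (hbound j)).weaken
    (le_of_eq (by ring))

end Truncation

section QuadraticProjection

variable {X : Type*} [NormedAddCommGroup X] [NormedSpace ℝ X]

/-- An operator of norm at most `A` from `Lip₀(B_X)` to the quadratic forms on `X` (with the
supremum norm on `B_X`) which fixes the squares of continuous functionals. As in the theorem, it is
encoded as a linear map on all functions, constrained only on `Lip₀(B_X)`. -/
structure IsQuadraticProjection (A : NNReal) (R : (UBall X → ℝ) →ₗ[ℝ] (UBall X → ℝ)) : Prop where
  exists_quadraticForm : ∀ f ∈ Lip0B X, ∃ q : QuadraticForm ℝ X, ∀ x : UBall X, R f x = q x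
  abs_apply_le : ∀ f ∈ Lip0B X, ∀ L, LipschitzWith L f → ∀ x, |R f x| ≤ A * L
  map_sq : ∀ l : X →L[ℝ] ℝ, R (fun x : UBall X ↦ l x ^ 2) = fun x : UBall X ↦ l x ^ 2

theorem IsQuadraticProjection.exists_of_factorization {Y : Type*} [NormedAddCommGroup Y]
    [NormedSpace ℝ Y] {A : NNReal} {R : (UBall X → ℝ) →ₗ[ℝ] (UBall X → ℝ)}
    (hR : IsQuadraticProjection A R) {S : X →L[ℝ] Y} {T : Y →L[ℝ] X} (hS : ‖S‖ ≤ 1)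
    (hT : ‖T‖ ≤ 1) {c : ℝ} (hc : c ≠ 0) (hST : ∀ y, S (T y) = c • y) :
    ∃ R' : (UBall Y → ℝ) →ₗ[ℝ] (UBall Y → ℝ), IsQuadraticProjection ((‖c‖₊ ^ 2)⁻¹ * A) R' := by
  refine ⟨(c ^ 2)⁻¹ • (LinearMap.funLeft ℝ ℝ (unitBallMap T hT) ∘ₗ R ∘ₗ
    LinearMap.funLeft ℝ ℝ (unitBallMap S hS)), fun f hf ↦ ?_, fun f hf L hL y ↦ ?_, fun l ↦ ?_⟩
  · obtain ⟨q, hq⟩ := hR.exists_quadraticForm _ (comp_unitBallMap_mem_lip0B hf S hS)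
    exact ⟨(c ^ 2)⁻¹ • q.comp T.toLinearMap,
      fun y ↦ congrArg ((c ^ 2)⁻¹ • ·) (hq (unitBallMap T hT y))⟩
  · have hle := hR.abs_apply_le _ (comp_unitBallMap_mem_lip0B hf S hS) _
      (hL.comp (lipschitzWith_unitBallMap S hS)) (unitBallMap T hT y)
    change |(c ^ 2)⁻¹ * R (f ∘ unitBallMap S hS) (unitBallMap T hT y)| ≤ _
    have hcoe : (((‖c‖₊ ^ 2)⁻¹ : NNReal) : ℝ) = (c ^ 2)⁻¹ := by simp
    rw [abs_mul, abs_of_nonneg (inv_nonneg.2 (sq_nonneg c)), NNReal.coe_mul, hcoe, mul_assoc]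
    gcongr
    simpa using hle
  · ext y
    have hsq := congrFun (hR.map_sq (l.comp S)) (unitBallMap T hT y)
    change (c ^ 2)⁻¹ * R (fun x : UBall X ↦ l.comp S x ^ 2) (unitBallMap T hT y) =
      l y ^ 2
    rw [hsq]
    change (c ^ 2)⁻¹ * l (S (T y)) ^ 2 = l y ^ 2
    rw [hST, map_smul, smul_eq_mul]
    field_simp

variable {ι : Type*} [Fintype ι] {A : NNReal}
  {R : (UBall (EuclideanSpace ℝ ι) → ℝ) →ₗ[ℝ] (UBall (EuclideanSpace ℝ ι) → ℝ)}

theorem IsQuadraticProjection.exists_quadraticForm_truncate (hR : IsQuadraticProjection A R)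
    (d : NNReal) (i j : ι) :
    ∃ q : QuadraticForm ℝ (EuclideanSpace ℝ ι),
      (∀ x : UBall (EuclideanSpace ℝ ι),
        R (fun x ↦ truncate d (x.1 i) * truncate d (x.1 j)) x = q x) ∧
      ∀ x, |q x| ≤ ↑(A * (2 * d)) * ‖x‖ ^ 2 := by
  have hlip := lipschitzWith_truncate_mul_truncate d i j
  have hmem : (fun x : UBall (EuclideanSpace ℝ ι) ↦ truncate d (x.1 i) * truncate d (x.1 j)) ∈
      Lip0B _ :=
    ⟨⟨_, hlip⟩, by simp [zeroB, truncate_of_abs_le]⟩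
  obtain ⟨q, hq⟩ := hR.exists_quadraticForm _ hmem
  refine ⟨q, hq, abs_quadraticForm_le_of_unitBall fun x ↦ ?_⟩
  rw [← hq]
  exact_mod_cast hR.abs_apply_le _ hmem _ hlip x

theorem IsQuadraticProjection.abs_sq_sub_sum_truncate_le (hR : IsQuadraticProjection A R)
    {d : NNReal} (hd : 0 < d) {σ : ι → ℝ} (hσ : ∀ i, |σ i| ≤ 1)
    (x : UBall (EuclideanSpace ℝ ι)) :
    |(∑ i, σ i * x.1 i) ^ 2 -
        ∑ i, ∑ j, σ i * σ j * R (fun x ↦ truncate d (x.1 i) * truncate d (x.1 j)) x| ≤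
      A * (8 * √(Fintype.card ι) / d) := by
  let l : EuclideanSpace ℝ ι →L[ℝ] ℝ := innerSL ℝ (WithLp.toLp 2 σ)
  have hl (y : EuclideanSpace ℝ ι) : l y = ∑ i, σ i * y i := by
    simp [l, PiLp.inner_apply, mul_comm]
  let f : UBall (EuclideanSpace ℝ ι) → ℝ := (fun y : UBall _ ↦ l y ^ 2) -
    ∑ i, ∑ j, (σ i * σ j) • fun y ↦ truncate d (y.1 i) * truncate d (y.1 j)
  have hf : f = fun y ↦ (∑ i, σ i * y.1 i) ^ 2 - (∑ i, σ i * truncate d (y.1 i)) ^ 2 := by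
    ext y
    simp only [f, Pi.sub_apply, hl, Finset.sum_apply, Pi.smul_apply, smul_eq_mul,
      pow_two (∑ i, σ i * truncate d (y.1 i)), Finset.sum_mul_sum, mul_mul_mul_comm]
  have hlip : LipschitzWith (8 * NNReal.sqrt (Fintype.card ι) / d) f :=
    hf ▸ lipschitzWith_sq_sub_sq_truncate hσ hd
  have hmem : f ∈ Lip0B _ := ⟨⟨_, hlip⟩, by simp [hf, zeroB, truncate_of_abs_le]⟩
  have hRf : R f x = (∑ i, σ i * x.1 i) ^ 2 -
      ∑ i, ∑ j, σ i * σ j * R (fun x ↦ truncate d (x.1 i) * truncate d (x.1 j)) x := by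
    rw [← hl, map_sub, hR.map_sq]
    simp only [map_sum, map_smul, Pi.sub_apply, Finset.sum_apply, Pi.smul_apply, smul_eq_mul]
  simpa only [hRf, NNReal.coe_div, NNReal.coe_mul, NNReal.coe_ofNat, Real.coe_sqrt,
    NNReal.coe_natCast] using hR.abs_apply_le f hmem _ hlip x

theorem IsQuadraticProjection.card_le_of_pos (hR : IsQuadraticProjection A R) {d : NNReal}
    (hd : 0 < d) :
    (Fintype.card ι : ℝ) ≤
      A * (8 * √(Fintype.card ι) / d) + 6 * A * d * Fintype.card ι := by
  obtain hι | hι := isEmpty_or_nonempty ι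
  · simp
  have hn : (0 : ℝ) < Fintype.card ι := by exact_mod_cast Fintype.card_pos
  choose q hRq hq using hR.exists_quadraticForm_truncate d
  obtain ⟨s, hs⟩ := exists_signVec_sum_le q hq
  let z : EuclideanSpace ℝ ι := (√(Fintype.card ι))⁻¹ • WithLp.toLp 2 (signVec s)
  have hz : z ∈ UBall _ := inv_sqrt_card_smul_signVec_mem_unitBall s
  have hsq : (∑ i, signVec s i * z i) ^ 2 = Fintype.card ι := by
    have hterm (i) : signVec s i * z i = (√(Fintype.card ι))⁻¹ := by
      change signVec s i * ((√(Fintype.card ι))⁻¹ * signVec s i) = _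
      rw [mul_left_comm, signVec_mul_self, mul_one]
    simp only [hterm, Finset.sum_const, Finset.card_univ, nsmul_eq_mul, mul_pow, inv_pow,
      Real.sq_sqrt hn.le]
    field_simp
  have hsum : ∑ i, ∑ j, signVec s i * signVec s j *
      R (fun x ↦ truncate d (x.1 i) * truncate d (x.1 j)) ⟨z, hz⟩ ≤
        6 * A * d * Fintype.card ι := by
    calc _ = (∑ i, ∑ j, signVec s i * signVec s j * q i j (WithLp.toLp 2 (signVec s))) /
          Fintype.card ι := by
          simp only [hRq, z, QuadraticMap.map_smul, ← mul_inv, Real.mul_self_sqrt hn.le,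
            smul_eq_mul, Finset.sum_div]
          refine Finset.sum_congr rfl fun i _ ↦ Finset.sum_congr rfl fun j _ ↦ ?_
          ring
      _ ≤ 3 * ↑(A * (2 * d)) * Fintype.card ι ^ 2 / Fintype.card ι := by gcongr
      _ = 6 * A * d * Fintype.card ι := by
          push_cast
          field_simp
          ring
  have habs := hR.abs_sq_sub_sum_truncate_le hd (fun i ↦ (abs_signVec s i).le) ⟨z, hz⟩
  rw [hsq] at habs
  linarith [(abs_le.1 habs).2]

theorem IsQuadraticProjection.card_le (hR : IsQuadraticProjection A R) :
    (Fintype.card ι : ℝ) ≤ (14 * A) ^ 4 := by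
  obtain hι | hι := isEmpty_or_nonempty ι
  · simp
  obtain ⟨r, hr, hcard⟩ : ∃ r : NNReal, 0 < r ∧ (Fintype.card ι : ℝ) = r ^ 4 := by
    refine ⟨NNReal.sqrt (NNReal.sqrt (Fintype.card ι)), by simp [Fintype.card_pos], ?_⟩
    have : NNReal.sqrt (NNReal.sqrt (Fintype.card ι)) ^ 4 = Fintype.card ι := by
      rw [pow_mul _ 2 2, NNReal.sq_sqrt, NNReal.sq_sqrt]
    exact_mod_cast this.symm
  have hsqrt : √(Fintype.card ι) = r ^ 2 := by
    rw [hcard, pow_mul _ 2 2, Real.sqrt_sq (by positivity)]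
  have hr' : (0 : ℝ) < r := NNReal.coe_pos.2 hr
  have hle : (r : ℝ) ^ 3 * r ≤ r ^ 3 * (14 * A) := by
    have := hR.card_le_of_pos (inv_pos.2 hr)
    rw [hsqrt, hcard] at this
    push_cast at this
    calc (r : ℝ) ^ 3 * r = r ^ 4 := by ring
      _ ≤ _ := this
      _ = r ^ 3 * (14 * A) := by field_simp; ring
  rw [hcard]
  gcongr
  exact le_of_mul_le_mul_left hle (pow_pos hr' 3)

end QuadraticProjection

section Polynomial

theorem exists_dilation_weights (k m : ℕ) :
    ∃ w t : Fin (k + 1) → ℝ, (∀ l, |t l| ≤ 1) ∧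
      ∀ j ≤ k, ∑ l, w l * t l ^ j = if j = m then 1 else 0 := by
  let t : Fin (k + 1) → ℝ := fun l ↦ (l : ℝ) / (k + 1)
  have hinj : Function.Injective t := fun a b hab ↦ by
    simpa [t, div_left_inj' (Nat.cast_add_one_ne_zero k : (k : ℝ) + 1 ≠ 0), Fin.ext_iff] using hab
  refine ⟨fun l ↦ (Lagrange.basis Finset.univ t l).coeff m, t, fun l ↦ ?_, fun j hj ↦ ?_⟩
  · rw [abs_of_nonneg (by positivity), div_le_one (by positivity)]
    exact_mod_cast l.2.le
  · have hdeg : (Polynomial.X ^ j : Polynomial ℝ).degree <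
        (Finset.univ : Finset (Fin (k + 1))).card := by
      rw [Polynomial.degree_X_pow, Finset.card_fin]
      exact_mod_cast Nat.lt_succ_of_le hj
    have hinterp := congrArg (Polynomial.coeff · m) (Lagrange.eq_interpolate hinj.injOn hdeg)
    simp only [Lagrange.interpolate_apply, Polynomial.eval_pow, Polynomial.eval_X,
      Polynomial.finsetSum_coeff, Polynomial.coeff_C_mul, Polynomial.coeff_X_pow] at hinterp
    simpa only [mul_comm, eq_comm] using hinterp.symm

variable {X : Type*} [NormedAddCommGroup X] [NormedSpace ℝ X] {k : ℕ}

theorem apply_zeroB_of_mem_pdegB {f : UBall X → ℝ} (hf : f ∈ PdegB k X) : f (zeroB X) = 0 := by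
  obtain ⟨P, hP⟩ := hf
  rw [hP]
  exact Finset.sum_eq_zero fun j hj ↦
    (P j).map_coord_zero (⟨0, (Finset.mem_Icc.1 hj).1⟩ : Fin j) rfl

theorem sq_mem_pdegB (hk : 2 ≤ k) (l : X →L[ℝ] ℝ) :
    (fun x : UBall X ↦ l x ^ 2) ∈ PdegB k X := by
  refine ⟨fun j ↦ (if j = 2 then (1 : ℝ) else 0) •
    (ContinuousMultilinearMap.mkPiAlgebraFin ℝ j ℝ).compContinuousLinearMap fun _ ↦ l, fun x ↦ ?_⟩
  rw [Finset.sum_eq_single_of_mem 2 (Finset.mem_Icc.2 ⟨one_le_two, hk⟩)]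
  · simp [pow_two]
  · intro j _ hj
    simp [hj]

/-- The dilation of the unit ball by a factor `t ∈ [-1, 1]`. -/
def dilate {t : ℝ} (ht : |t| ≤ 1) : UBall X → UBall X :=
  unitBallMap (t • ContinuousLinearMap.id ℝ X) <|
    (norm_smul_le t (ContinuousLinearMap.id ℝ X)).trans <|
      mul_le_one₀ ht (norm_nonneg _) ContinuousLinearMap.norm_id_le

theorem coe_dilate {t : ℝ} (ht : |t| ≤ 1) (x : UBall X) : (dilate ht x : X) = t • (x : X) := rfl

variable {κ : Type*} [Fintype κ] (w : κ → ℝ) {t : κ → ℝ} (ht : ∀ l, |t l| ≤ 1)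

/-- The function `x ↦ ∑ₗ wₗ f(tₗx)` on the unit ball, as a linear function of `f`. For the weights
of `exists_dilation_weights` it is the `m`-homogeneous part of a polynomial `f`. -/
def dilationSum : (UBall X → ℝ) →ₗ[ℝ] (UBall X → ℝ) :=
  ∑ l, w l • LinearMap.funLeft ℝ ℝ (dilate (ht l))

theorem dilationSum_apply (f : UBall X → ℝ) (x : UBall X) :
    dilationSum w ht f x = ∑ l, w l * f (dilate (ht l) x) := by
  simp [dilationSum, LinearMap.funLeft_apply]

theorem abs_dilationSum_apply_le {f : UBall X → ℝ} {B : ℝ} (hf : ∀ x, |f x| ≤ B) (x : UBall X) :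
    |dilationSum w ht f x| ≤ (∑ l, |w l|) * B := by
  rw [dilationSum_apply, Finset.sum_mul]
  refine (Finset.abs_sum_le_sum_abs _ _).trans (Finset.sum_le_sum fun l _ ↦ ?_)
  rw [abs_mul]
  exact mul_le_mul_of_nonneg_left (hf _) (abs_nonneg _)

theorem dilationSum_eq_homogeneous_part {m : ℕ} (hm : m ∈ Finset.Icc 1 k)
    (hw : ∀ j ≤ k, ∑ l, w l * t l ^ j = if j = m then 1 else 0) {f : UBall X → ℝ}
    {P : (j : ℕ) → ContinuousMultilinearMap ℝ (fun _ : Fin j ↦ X) ℝ}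
    (hf : ∀ x : UBall X, f x = ∑ j ∈ Finset.Icc 1 k, P j fun _ ↦ x) (x : UBall X) :
    dilationSum w ht f x = P m fun _ ↦ x := by
  have hhom (l : κ) (j : ℕ) : (P j fun _ ↦ (dilate (ht l) x : X)) = t l ^ j * P j fun _ ↦ x := by
    simpa [coe_dilate] using (P j).map_smul_univ (fun _ ↦ t l) fun _ ↦ (x : X)
  calc dilationSum w ht f x = ∑ l, ∑ j ∈ Finset.Icc 1 k, w l * t l ^ j * P j fun _ ↦ x := by
        simp only [dilationSum_apply, hf, hhom, Finset.mul_sum, mul_assoc]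
    _ = ∑ j ∈ Finset.Icc 1 k, (∑ l, w l * t l ^ j) * P j fun _ ↦ x := by
        rw [Finset.sum_comm]
        simp only [Finset.sum_mul]
    _ = ∑ j ∈ Finset.Icc 1 k, if j = m then P j fun _ ↦ x else 0 :=
        Finset.sum_congr rfl fun j hj ↦ by
          rw [hw j (Finset.mem_Icc.1 hj).2, ite_mul, one_mul, zero_mul]
    _ = P m fun _ ↦ x := by rw [Finset.sum_ite_eq' _ m, if_pos hm]

theorem exists_isQuadraticProjection (hk : 2 ≤ k) {Q : (UBall X → ℝ) →ₗ[ℝ] (UBall X → ℝ)}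
    {K : NNReal} (hrange : ∀ f ∈ Lip0B X, Q f ∈ PdegB k X) (hfix : ∀ f ∈ PdegB k X, Q f = f)
    (hlip : ∀ f ∈ Lip0B X, ∀ L : NNReal, LipschitzWith L f → LipschitzWith (K * L) (Q f)) :
    ∃ A R, IsQuadraticProjection (X := X) A R := by
  obtain ⟨w, t, ht, hw⟩ := exists_dilation_weights k 2
  refine ⟨(∑ l, ‖w l‖₊) * K, dilationSum w ht ∘ₗ Q, fun f hf ↦ ?_, fun f hf L hL x ↦ ?_,
    fun l ↦ ?_⟩
  · obtain ⟨P, hP⟩ := hrange f hf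
    obtain ⟨q, hq⟩ := exists_quadraticForm_eq_multilinear (P 2)
    refine ⟨q, fun x ↦ ?_⟩
    rw [hq]
    exact dilationSum_eq_homogeneous_part w ht (Finset.mem_Icc.2 ⟨one_le_two, hk⟩) hw hP x
  · have hQf := abs_le_of_lipschitzWith_unitBall (hlip f hf L hL)
      (apply_zeroB_of_mem_pdegB (hrange f hf))
    simpa [mul_assoc] using abs_dilationSum_apply_le w ht hQf x
  · ext x
    rw [LinearMap.comp_apply, hfix _ (sq_mem_pdegB hk l), dilationSum_apply]
    have hterm (i) : w i * l (dilate (ht i) x : X) ^ 2 = w i * t i ^ 2 * l x ^ 2 := by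
      rw [coe_dilate, map_smul, smul_eq_mul]
      ring
    rw [Finset.sum_congr rfl fun i _ ↦ hterm i, ← Finset.sum_mul, hw 2 hk, if_pos rfl, one_mul]

end Polynomial

theorem norm_inv_smul_le_one {V : Type*} [SeminormedAddCommGroup V] [NormedSpace ℝ V] {C : ℝ}
    (hC : 0 < C) {v : V} (hv : ‖v‖ ≤ C) : ‖C⁻¹ • v‖ ≤ 1 := by
  rw [norm_smul, Real.norm_of_nonneg (inv_nonneg.2 hC.le)]
  exact (inv_mul_le_one₀ hC).2 hv

theorem exists_contractions_of_complemented {X E : Type*} [NormedAddCommGroup X] [NormedSpace ℝ X]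
    [NormedAddCommGroup E] [NormedSpace ℝ E] {C : ℝ} (hC : 0 < C) {F : Submodule ℝ X}
    {T : E ≃ₗ[ℝ] F} (hT : ∀ v, ‖v‖ ≤ ‖(T v : X)‖ ∧ ‖(T v : X)‖ ≤ C * ‖v‖) {P : X →L[ℝ] X}
    (hPF : ∀ x, P x ∈ F) (hP : ∀ y ∈ F, P y = y) (hPC : ‖P‖ ≤ C) :
    ∃ (S : X →L[ℝ] E) (U : E →L[ℝ] X), ‖S‖ ≤ 1 ∧ ‖U‖ ≤ 1 ∧ ∀ v, S (U v) = (C⁻¹) ^ 2 • v := by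
  let S₀ : X →ₗ[ℝ] E := T.symm.toLinearMap ∘ₗ P.toLinearMap.codRestrict F hPF
  have hTS₀ (x : X) : (T (S₀ x) : X) = P x := by simp [S₀]
  have hS₀ (x : X) : ‖S₀ x‖ ≤ C * ‖x‖ :=
    ((hT (S₀ x)).1.trans_eq (congrArg _ (hTS₀ x))).trans (P.le_of_opNorm_le hPC x)
  have hS₀T (v : E) : S₀ (T v) = v := T.injective (Subtype.ext ((hTS₀ _).trans (hP _ (T v).2)))
  let S := S₀.mkContinuous C hS₀
  let U := (F.subtype ∘ₗ T.toLinearMap).mkContinuous C fun v ↦ (hT v).2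
  have hS : ‖S‖ ≤ C := LinearMap.mkContinuous_norm_le _ hC.le _
  have hU : ‖U‖ ≤ C := LinearMap.mkContinuous_norm_le _ hC.le _
  refine ⟨C⁻¹ • S, C⁻¹ • U, norm_inv_smul_le_one hC hS, norm_inv_smul_le_one hC hU, fun v ↦ ?_⟩
  change C⁻¹ • S₀ (C⁻¹ • (T v : X)) = C⁻¹ ^ 2 • v
  rw [map_smul, hS₀T, smul_smul, pow_two]

theorem statement6_general (X : Type*) [NormedAddCommGroup X] [NormedSpace ℝ X]
    (C : ℝ) (hC : 1 ≤ C)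
    (hunif : ∀ n : ℕ, ∃ F : Submodule ℝ X,
      (∃ T : EuclideanSpace ℝ (Fin n) ≃ₗ[ℝ] F,
        ∀ v : EuclideanSpace ℝ (Fin n), ‖v‖ ≤ ‖(T v : X)‖ ∧ ‖(T v : X)‖ ≤ C * ‖v‖) ∧
      (∃ P : X →L[ℝ] X, (∀ x : X, P x ∈ F) ∧ (∀ y ∈ F, P y = y) ∧ ‖P‖ ≤ C))
    (k : ℕ) (hk : 2 ≤ k) :
    ¬ ∃ (Q : (↥(UBall X) → ℝ) →ₗ[ℝ] (↥(UBall X) → ℝ)) (K : NNReal),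
      (∀ f ∈ Lip0B X, Q f ∈ PdegB k X) ∧ (∀ f ∈ PdegB k X, Q f = f) ∧
      (∀ f ∈ Lip0B X, ∀ L : NNReal, LipschitzWith L f → LipschitzWith (K * L) (Q f)) := by
  rintro ⟨Q, K, hrange, hfix, hlip⟩
  have hC₀ : 0 < C := one_pos.trans_le hC
  have hc : C⁻¹ ^ 2 ≠ 0 := pow_ne_zero _ (inv_ne_zero hC₀.ne')
  obtain ⟨A, R, hR⟩ := exists_isQuadraticProjection hk hrange hfix hlip
  obtain ⟨n, hn⟩ := exists_nat_gt ((14 * ((‖C⁻¹ ^ 2‖₊ ^ 2)⁻¹ * A : NNReal) : ℝ) ^ 4)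
  obtain ⟨F, ⟨T, hT⟩, P, hPF, hP, hPC⟩ := hunif n
  obtain ⟨S, U, hS, hU, hSU⟩ := exists_contractions_of_complemented hC₀ hT hPF hP hPC
  obtain ⟨R', hR'⟩ := hR.exists_of_factorization hS hU hc hSU
  exact hn.not_ge (by simpa using hR'.card_le)

/-- **Theorem 4.3 (non-homogeneous case).** If an infinite-dimensional Banach space `X`
contains uniformly complemented `ℓ₂ⁿ`'s, then for every `k ≥ 2` the space `P₀ᵏ(X)` of
polynomials of degree at most `k` vanishing at `0` is not complemented in `Lip₀(B_X)`. -/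
theorem statement6 (X : Type*) [NormedAddCommGroup X] [NormedSpace ℝ X] [CompleteSpace X]
    (hinf : ¬ FiniteDimensional ℝ X)
    (C : ℝ) (hC : 1 ≤ C)
    (hunif : ∀ n : ℕ, ∃ F : Submodule ℝ X,
      (∃ T : EuclideanSpace ℝ (Fin n) ≃ₗ[ℝ] F,
        ∀ v : EuclideanSpace ℝ (Fin n), ‖v‖ ≤ ‖(T v : X)‖ ∧ ‖(T v : X)‖ ≤ C * ‖v‖) ∧
      (∃ P : X →L[ℝ] X, (∀ x : X, P x ∈ F) ∧ (∀ y ∈ F, P y = y) ∧ ‖P‖ ≤ C))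
    (k : ℕ) (hk : 2 ≤ k) :
    ¬ ∃ (Q : (↥(UBall X) → ℝ) →ₗ[ℝ] (↥(UBall X) → ℝ)) (K : NNReal),
      (∀ f ∈ Lip0B X, Q f ∈ PdegB k X) ∧ (∀ f ∈ PdegB k X, Q f = f) ∧
      (∀ f ∈ Lip0B X, ∀ L : NNReal, LipschitzWith L f → LipschitzWith (K * L) (Q f)) :=
  statement6_general X C hC hunif k hk
end
end

section
/- Let X be an infinite-dimensional separable 𝓛₁-space, i.e. there exists λ ≥ 1 such that every finite-dimensional subspace of X is contained in a finite-dimensional subspace F of X whose Banach–Mazur distance to ℓ₁^{dim F} is at most λ. Then for every k ≥ 1 the space P(ᵏX) of k-homogeneous polynomials on X is isomorphic, as a Banach space, to ℓ∞; in particular, P(ᵏX) is complemented in Lip₀(B_X). -/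
open Metric Set Real

noncomputable section

/-- The space `P(ᵏX)` of `k`-homogeneous polynomials on `X`, as a submodule of the
real-valued functions on `X`. -/
def PhomSub (k : ℕ) (X : Type*) [NormedAddCommGroup X] [NormedSpace ℝ X] :
    Submodule ℝ (X → ℝ) where
  carrier := {f | ∃ M : ContinuousMultilinearMap ℝ (fun _ : Fin k => X) ℝ,
    ∀ x : X, f x = M (fun _ => x)}
  add_mem' := by
    rintro f g ⟨M, hM⟩ ⟨N, hN⟩
    exact ⟨M + N, fun x => by simp [hM x, hN x]⟩
  zero_mem' := ⟨0, fun x => by simp⟩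
  smul_mem' := by
    rintro c f ⟨M, hM⟩
    exact ⟨c • M, fun x => by simp [hM x]⟩

/-- The polynomial norm `‖f‖_P = sup_{x ∈ B_X} |f x|`. -/
def supNormBall (X : Type*) [NormedAddCommGroup X] (f : X → ℝ) : ℝ :=
  sSup ((fun x => |f x|) '' UBall X)

/-!
Restriction to the ball identifies `P(ᵏX)` with the range of `M ↦ (x ↦ M(x, …, x))` in `ℓ∞(B_X)`.
Averaging the polarization formula over the `ℓ₁`-coordinates of finite-dimensional subspaces and
passing to a limit along an ultrafilter recovers a bounded form from the values of its polynomial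
on the ball. This extraction makes sense for every bounded function on the ball, so `P(ᵏX)` is
complemented in `ℓ∞(B_X)` and in `Lip₀(B_X)`; by separability it even embeds as a complemented
subspace of `ℓ∞(ℕ)`.

Conversely, `X` carries functionals `fₙ` with `∑ |fₙ(z)| ≤ C ‖z‖` that are almost biorthogonal to a
sequence `xₙ` in the ball: disjointly supported functionals on the `ℓ₁`-coordinates provide bounds
from below, and Rosenthal's disjointification lemma makes the off-diagonal sums small. Hence
`a ↦ ∑ aₙ fₙᵏ` embeds `ℓ∞` into `P(ᵏX)`, and evaluation at the `xₙ` is a left inverse up to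
a small perturbation. Pełczyński's decomposition method then gives `P(ᵏX) ≃ ℓ∞`.
-/

open Filter Topology Function
open scoped lp ENNReal

section Linfty

variable {I J V E F : Type*} [NormedAddCommGroup V] [NormedSpace ℝ V]
  [NormedAddCommGroup E] [NormedSpace ℝ E] [NormedAddCommGroup F] [NormedSpace ℝ F]

/-- The map into `ℓ∞` whose coordinates are a given uniformly bounded family of operators. -/
def linftyLift (φ : I → V →L[ℝ] E) (C : ℝ) (hφ : ∀ i, ‖φ i‖ ≤ C) : V →L[ℝ] ℓ^∞(I, E) :=
  have bound (v : V) (i : I) : ‖φ i v‖ ≤ |C| * ‖v‖ :=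
    (φ i).le_of_opNorm_le ((hφ i).trans (le_abs_self C)) v
  LinearMap.mkContinuous
    { toFun v := ⟨fun i => φ i v, memℓp_infty ⟨|C| * ‖v‖, forall_mem_range.2 (bound v)⟩⟩
      map_add' v w := lp.ext (funext fun i => map_add (φ i) v w)
      map_smul' c v := lp.ext (funext fun i => map_smul (φ i) c v) }
    |C| fun v => lp.norm_le_of_forall_le (by positivity) (bound v)

/-- The `i`-th coordinate of `ℓ∞`. -/
def linftyEval (i : I) : ℓ^∞(I, E) →L[ℝ] E :=
  lp.evalCLM ℝ (fun _ : I => E) ⊤ i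

@[simp]
theorem linftyEval_apply (i : I) (v : ℓ^∞(I, E)) : linftyEval i v = v i :=
  rfl

theorem norm_linftyEval_le (i : I) : ‖(linftyEval i : ℓ^∞(I, E) →L[ℝ] E)‖ ≤ 1 :=
  ContinuousLinearMap.opNorm_le_bound _ zero_le_one fun v =>
    (lp.norm_apply_le_norm ENNReal.top_ne_zero v i).trans_eq (one_mul _).symm

/-- Precomposition with `q : I → J`, as an operator between `ℓ∞` spaces. -/
def linftyComap (q : I → J) : ℓ^∞(J, E) →L[ℝ] ℓ^∞(I, E) :=
  linftyLift (fun i => linftyEval (q i)) 1 fun i => norm_linftyEval_le (q i)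

@[simp]
theorem linftyComap_apply (q : I → J) (v : ℓ^∞(J, E)) (i : I) : linftyComap q v i = v (q i) :=
  rfl

/-- Coordinatewise application of an operator. -/
def linftyMap (T : E →L[ℝ] F) : ℓ^∞(I, E) →L[ℝ] ℓ^∞(I, F) :=
  lp.mapCLM ⊤ (fun _ => T) (norm_nonneg T) fun _ => le_rfl

@[simp]
theorem linftyMap_apply (T : E →L[ℝ] F) (v : ℓ^∞(I, E)) (i : I) : linftyMap T v i = T (v i) :=
  rfl

/-- Isomorphic spaces have isomorphic `ℓ∞`-sums. -/
def linftyCongr (e : E ≃L[ℝ] F) : ℓ^∞(I, E) ≃L[ℝ] ℓ^∞(I, F) :=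
  .equivOfInverse (linftyMap e) (linftyMap e.symm)
    (fun v => lp.ext (funext fun i => e.symm_apply_apply (v i)))
    fun v => lp.ext (funext fun i => e.apply_symm_apply (v i))

/-- Reindexing of `ℓ∞` along a bijection. -/
def linftyReindex (q : I ≃ J) : ℓ^∞(J, E) ≃L[ℝ] ℓ^∞(I, E) :=
  .equivOfInverse (linftyComap q) (linftyComap q.symm)
    (fun v => lp.ext (funext fun j => congrArg v (q.apply_symm_apply j)))
    fun v => lp.ext (funext fun i => congrArg v (q.symm_apply_apply i))

/-- `ℓ∞(E × F) ≃ ℓ∞(E) × ℓ∞(F)`. -/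
def linftyProdEquiv : ℓ^∞(I, E × F) ≃L[ℝ] ℓ^∞(I, E) × ℓ^∞(I, F) :=
  .equivOfInverse
    ((linftyMap (.fst ℝ E F)).prod (linftyMap (.snd ℝ E F)))
    ((linftyMap (.inl ℝ E F)).coprod (linftyMap (.inr ℝ E F)))
    (fun v => lp.ext (funext fun i => by simp))
    fun v => Prod.ext (lp.ext (funext fun i => by simp)) (lp.ext (funext fun i => by simp))

/-- `ℓ∞(E) ≃ E × ℓ∞(E)`, splitting off the first term of a sequence. -/
def linftyConsEquiv : ℓ^∞(ℕ, E) ≃L[ℝ] E × ℓ^∞(ℕ, E) :=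
  .equivOfInverse
    ((linftyEval 0).prod (linftyComap Nat.succ))
    (linftyLift
      (fun n => Nat.casesOn n (.fst ℝ E _) fun m => (linftyEval m).comp (.snd ℝ E _)) 1
      (by
        rintro (_ | m)
        · exact ContinuousLinearMap.norm_fst_le ..
        · exact (ContinuousLinearMap.opNorm_comp_le _ _).trans
            (mul_le_one₀ (norm_linftyEval_le m) (norm_nonneg _)
              (ContinuousLinearMap.norm_snd_le ..))))
    (fun v => lp.ext (funext fun n => by cases n <;> rfl))
    fun _ => rfl

/-- `ℓ∞(I × J, E) ≃ ℓ∞(I, ℓ∞(J, E))`. -/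
def linftyCurryEquiv : ℓ^∞(I × J, E) ≃L[ℝ] ℓ^∞(I, ℓ^∞(J, E)) :=
  .equivOfInverse
    (linftyLift (fun i => linftyComap (Prod.mk i)) 1 fun i =>
      ContinuousLinearMap.opNorm_le_bound _ zero_le_one fun v =>
        lp.norm_le_of_forall_le (by positivity) fun j => by
          simpa using lp.norm_apply_le_norm ENNReal.top_ne_zero v (i, j))
    (linftyLift (fun p => (linftyEval p.2).comp (linftyEval p.1)) 1 fun p =>
      (ContinuousLinearMap.opNorm_comp_le _ _).trans
        (mul_le_one₀ (norm_linftyEval_le p.2) (norm_nonneg _) (norm_linftyEval_le p.1)))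
    (fun _ => rfl) fun _ => rfl

/-- `ℓ∞ ≃ ℓ∞(ℓ∞)`. -/
def linftySelfEquiv : ℓ^∞(ℕ, E) ≃L[ℝ] ℓ^∞(ℕ, ℓ^∞(ℕ, E)) :=
  (linftyReindex Nat.pairEquiv).trans linftyCurryEquiv

end Linfty

section Decomposition

variable {Y Z V : Type*} [NormedAddCommGroup Y] [NormedSpace ℝ Y]
  [NormedAddCommGroup Z] [NormedSpace ℝ Z] [NormedAddCommGroup V] [NormedSpace ℝ V]

/-- `Z ≃ Y × Z` when `Z ≃ ℓ∞(Z)` and `Y` is a direct factor of `Z`. -/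
def linftyAbsorb (eZ : Z ≃L[ℝ] ℓ^∞(ℕ, Z)) (eV : Z ≃L[ℝ] Y × V) : Z ≃L[ℝ] Y × Z :=
  let e : Z ≃L[ℝ] ℓ^∞(ℕ, Y) × ℓ^∞(ℕ, V) := eZ.trans ((linftyCongr eV).trans linftyProdEquiv)
  e.trans <| (linftyConsEquiv.prodCongr (.refl ℝ _)).trans <|
    (ContinuousLinearEquiv.prodAssoc ℝ _ _ _).trans <| .prodCongr (.refl ℝ Y) e.symm

theorem pelczynski_decomposition (eZ : Z ≃L[ℝ] ℓ^∞(ℕ, Z))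
    {i : Y →L[ℝ] Z} {p : Z →L[ℝ] Y} (hpi : LeftInverse p i)
    {j : Z →L[ℝ] Y} {q : Y →L[ℝ] Z} (hqj : LeftInverse q j) :
    Nonempty (Y ≃L[ℝ] Z) :=
  let eY : Y ≃L[ℝ] Z × q.ker := .equivOfRightInverse q j hqj
  let square : Z ≃L[ℝ] Z × Z :=
    eZ.trans (linftyConsEquiv.trans (.prodCongr (.refl ℝ Z) eZ.symm))
  ⟨eY.trans <| (ContinuousLinearEquiv.prodCongr square (.refl ℝ _)).trans <|
    (ContinuousLinearEquiv.prodAssoc ℝ _ _ _).trans <|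
    (ContinuousLinearEquiv.prodCongr (.refl ℝ Z) eY.symm).trans <|
    (ContinuousLinearEquiv.prodComm ℝ Z Y).trans
      (linftyAbsorb eZ (.equivOfRightInverse p i hpi)).symm⟩

end Decomposition

section Rosenthal

theorem rosenthal_disjointification_of_sum_le_natCast_mul {ε : ℝ} (hε : 0 ≤ ε) (K : ℕ)
    {a : ℕ → ℕ → ℝ} (ha : ∀ n m, 0 ≤ a n m) (hsum : ∀ n (t : Finset ℕ), ∑ m ∈ t, a n m ≤ K * ε) :
    ∃ φ : ℕ → ℕ, Injective φ ∧ ∀ n (t : Finset ℕ), n ∉ t → ∑ m ∈ t, a (φ n) (φ m) ≤ ε := by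
  induction K generalizing a with
  | zero =>
    refine ⟨id, injective_id, fun n t _ => (hsum n t).trans ?_⟩
    simpa using hε
  | succ K ih =>
    by_cases hblock : ∃ p, ∀ q (t : Finset ℕ), q ∉ t →
        ∑ r ∈ t, a (Nat.pair p q) (Nat.pair p r) ≤ ε
    · obtain ⟨p, hp⟩ := hblock
      exact ⟨Nat.pair p, fun x y hxy => (Nat.pair_eq_pair.1 hxy).2, hp⟩
    -- Pick a bad row in every block; deleting its own block lowers its sums by `ε`.
    push Not at hblock
    choose q s hqs hs using hblock
    have hsum' (p : ℕ) (t : Finset ℕ) :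
        ∑ p' ∈ t, a (Nat.pair p (q p)) (Nat.pair p' (q p')) ≤ K * ε := by
      have hdisj : Disjoint (t.image fun p' => Nat.pair p' (q p')) ((s p).image (Nat.pair p)) := by
        simp only [Finset.disjoint_left, Finset.mem_image, not_exists, not_and,
          forall_exists_index, and_imp]
        rintro _ p' - rfl r hr hpr
        obtain ⟨rfl, rfl⟩ := Nat.pair_eq_pair.1 hpr
        exact hqs _ hr
      have h := hsum (Nat.pair p (q p))
        ((t.image fun p' => Nat.pair p' (q p')).disjUnion ((s p).image (Nat.pair p)) hdisj)
      rw [Finset.sum_disjUnion, Finset.sum_image fun _ _ _ _ h => (Nat.pair_eq_pair.1 h).1,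
        Finset.sum_image fun _ _ _ _ h => (Nat.pair_eq_pair.1 h).2] at h
      push_cast at h
      linarith [hs p]
    obtain ⟨φ, hφ, hφsum⟩ := ih (fun _ _ => ha _ _) hsum'
    exact ⟨fun n => Nat.pair (φ n) (q (φ n)), fun x y hxy => hφ (Nat.pair_eq_pair.1 hxy).1, hφsum⟩

theorem rosenthal_disjointification {ε C : ℝ} (hε : 0 < ε) {a : ℕ → ℕ → ℝ} (ha : ∀ n m, 0 ≤ a n m)
    (hsum : ∀ n (t : Finset ℕ), ∑ m ∈ t, a n m ≤ C) :
    ∃ φ : ℕ → ℕ, Injective φ ∧ ∀ n (t : Finset ℕ), n ∉ t → ∑ m ∈ t, a (φ n) (φ m) ≤ ε := by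
  obtain ⟨K, hK⟩ := exists_nat_ge (C / ε)
  exact rosenthal_disjointification_of_sum_le_natCast_mul hε.le K ha fun n t =>
    (hsum n t).trans ((div_le_iff₀ hε).1 hK)

end Rosenthal

section Signs

variable {ι : Type*} [Fintype ι] [DecidableEq ι]

theorem sum_signs_eq_zero {A : Type*} [AddCommGroup A] {f : (ι → ℤˣ) → A} (j : ι)
    (hf : ∀ ε, f (Pi.mulSingle j (-1) * ε) = -f ε) : ∑ ε, f ε = 0 := by
  refine Finset.sum_involution (fun ε _ => Pi.mulSingle j (-1) * ε) (fun ε _ => by simp [hf])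
    (fun ε _ _ hfix => ?_) (fun _ _ => Finset.mem_univ _) fun ε _ => ?_
  · have := congrFun hfix j
    simp at this
  · rw [← mul_assoc, ← Pi.mulSingle_mul]
    simp

theorem card_signs : Fintype.card (ι → ℤˣ) = 2 ^ Fintype.card ι := by
  rw [Fintype.card_fun, Fintype.card_units_int]

theorem sum_signs_mul_sign (j l : ι) :
    ∑ ε : ι → ℤˣ, (((ε j : ℤ) : ℝ) * ((ε l : ℤ) : ℝ)) =
      if j = l then 2 ^ Fintype.card ι else 0 := by
  split_ifs with h
  · have (ε : ι → ℤˣ) : ((ε j : ℤ) : ℝ) * ((ε l : ℤ) : ℝ) = 1 := by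
      rw [h, ← Int.cast_mul, ← Units.val_mul, Int.units_mul_self, Units.val_one, Int.cast_one]
    simp [this]
  · exact sum_signs_eq_zero j fun ε => by simp [Pi.mulSingle_eq_of_ne' h]

theorem sum_signs_sq (a : ι → ℝ) :
    ∑ ε : ι → ℤˣ, (∑ j, ε j • a j) ^ 2 = 2 ^ Fintype.card ι * ∑ j, a j ^ 2 := by
  calc ∑ ε : ι → ℤˣ, (∑ j, ε j • a j) ^ 2
      = ∑ j, ∑ l, (∑ ε : ι → ℤˣ, (((ε j : ℤ) : ℝ) * ((ε l : ℤ) : ℝ))) * (a j * a l) := by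
        simp only [Units.smul_def, zsmul_eq_mul, sq, Finset.sum_mul_sum]
        rw [Finset.sum_comm]
        refine Finset.sum_congr rfl fun j _ => ?_
        rw [Finset.sum_comm]
        simp only [Finset.sum_mul, mul_mul_mul_comm]
    _ = 2 ^ Fintype.card ι * ∑ j, a j ^ 2 := by
        simp [sum_signs_mul_sign, Finset.mul_sum, sq]

theorem sum_signs_abs_le (a : ι → ℝ) :
    ∑ ε : ι → ℤˣ, |∑ j, ε j • a j| ≤ 2 ^ Fintype.card ι * √(∑ j, a j ^ 2) := by
  refine abs_le_of_sq_le_sq' ?_ (by positivity) |>.2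
  calc (∑ ε : ι → ℤˣ, |∑ j, ε j • a j|) ^ 2
      ≤ Fintype.card (ι → ℤˣ) * ∑ ε : ι → ℤˣ, |∑ j, ε j • a j| ^ 2 := sq_sum_le_card_mul_sum_sq
    _ = (2 ^ Fintype.card ι * √(∑ j, a j ^ 2)) ^ 2 := by
        simp only [sq_abs, sum_signs_sq, card_signs]
        rw [mul_pow, sq_sqrt (by positivity)]
        push_cast
        ring

theorem sum_signs_polarization {R V W : Type*} [CommRing R] [AddCommGroup V] [Module R V]
    [AddCommGroup W] [Module R W] (M : MultilinearMap R (fun _ : ι => V) W) (v : ι → V) :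
    ∑ ε : ι → ℤˣ, (∏ j, ε j) • M (fun _ => ∑ j, ε j • v j) =
      2 ^ Fintype.card ι • ∑ σ : Equiv.Perm ι, M (v ∘ σ) := by
  have expand (ε : ι → ℤˣ) : (∏ j, ε j) • M (fun _ => ∑ j, ε j • v j) =
      ∑ r : ι → ι, ((∏ j, ε j) * ∏ j, ε (r j)) • M (v ∘ r) := by
    simp only [M.map_sum, Finset.smul_sum, mul_smul, Units.smul_def, ← Int.cast_smul_eq_zsmul R,
      M.map_smul_univ, comp_def, Units.coe_prod, Int.cast_prod]
  simp only [expand]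
  rw [Finset.sum_comm, Finset.smul_sum]
  refine (Fintype.sum_of_injective (fun σ : Equiv.Perm ι => (σ : ι → ι)) DFunLike.coe_injective _ _
    (fun r hr => ?_) fun σ => ?_).symm
  · have hsurj : ¬ Surjective r := fun h =>
      hr ⟨.ofBijective r ⟨Finite.injective_iff_surjective.2 h, h⟩, rfl⟩
    simp only [Surjective, not_forall, not_exists] at hsurj
    obtain ⟨j, hj⟩ := hsurj
    have hflip (ε : ι → ℤˣ) (i : ι) : (Pi.mulSingle j (-1) * ε : ι → ℤˣ) (r i) = ε (r i) := by
      simp [Pi.mulSingle_eq_of_ne (hj i)]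
    exact sum_signs_eq_zero j fun ε => by
      simp only [hflip]
      simp [Finset.prod_mul_distrib]
  · have (ε : ι → ℤˣ) : (∏ j, ε j) * ∏ j, ε (σ j) = 1 := by
      rw [Equiv.prod_comp σ ε, Int.units_mul_self]
    simp [this]

end Signs

section Limits

variable {ι : Type*} {X F : Type*} [NormedAddCommGroup X] [NormedSpace ℝ X]
  [NormedAddCommGroup F] [NormedSpace ℝ F]

theorem exists_tendsto_ultrafilter_of_abs_le (U : Ultrafilter ι) {h : ι → ℝ} {C : ℝ}
    (hC : ∀ᶠ s in U, |h s| ≤ C) : ∃ c, Tendsto h U (𝓝 c) := by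
  obtain ⟨c, -, hc⟩ := (isCompact_Icc (a := -C) (b := C)).ultrafilter_le_nhds (U.map h)
    (le_principal_iff.2 (hC.mono fun s hs => abs_le.1 hs))
  exact ⟨c, hc⟩

theorem exists_continuousLinearMap_tendsto {l : Filter ι} [l.NeBot] (Λ : ι → X →ₗ[ℝ] F) (C : ℝ)
    (hC : ∀ x, ∀ᶠ s in l, ‖Λ s x‖ ≤ C * ‖x‖)
    (hlim : ∀ x, ∃ c, Tendsto (fun s => Λ s x) l (𝓝 c)) :
    ∃ f : X →L[ℝ] F, ∀ x, Tendsto (fun s => Λ s x) l (𝓝 (f x)) := by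
  choose f hf using hlim
  exact ⟨(linearMapOfTendsto f Λ (tendsto_pi_nhds.2 hf)).mkContinuous C fun x =>
    le_of_tendsto (hf x).norm (hC x), hf⟩

theorem exists_continuousMultilinearMap_tendsto {κ : Type*} [Fintype κ] {V : Type*}
    [NormedAddCommGroup V] [NormedSpace ℝ V] {l : Filter ι} [l.NeBot]
    (Λ : ι → V →ₗ[ℝ] MultilinearMap ℝ (fun _ : κ => X) F) (C : ℝ)
    (hC : ∀ g v, ∀ᶠ s in l, ‖Λ s g v‖ ≤ C * ‖g‖ * ∏ j, ‖v j‖)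
    (hlim : ∀ g v, ∃ c, Tendsto (fun s => Λ s g v) l (𝓝 c)) :
    ∃ Φ : V →L[ℝ] ContinuousMultilinearMap ℝ (fun _ : κ => X) F,
      ∀ g v, Tendsto (fun s => Λ s g v) l (𝓝 (Φ g v)) := by
  choose φ hφ using hlim
  have limit_eq {g v} {h : ι → F} {c : F} (hh : ∀ s, h s = Λ s g v) (hc : Tendsto h l (𝓝 c)) :
      φ g v = c :=
    tendsto_nhds_unique (hφ g v) (hc.congr hh)
  let form (g : V) : MultilinearMap ℝ (fun _ : κ => X) F :=
    { toFun := φ g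
      map_update_add' v j x y := limit_eq
        (fun s => ((Λ s g).map_update_add v j x y).symm) ((hφ g _).add (hφ g _))
      map_update_smul' v j c x := limit_eq
        (fun s => ((Λ s g).map_update_smul v j c x).symm) ((hφ g _).const_smul c) }
  let Φ : V →ₗ[ℝ] MultilinearMap ℝ (fun _ : κ => X) F :=
    { toFun := form
      map_add' g h := MultilinearMap.ext fun v => limit_eq
        (fun s => by rw [map_add, add_apply]) ((hφ g v).add (hφ h v))
      map_smul' c g := MultilinearMap.ext fun v => limit_eq
        (fun s => by rw [map_smul, smul_apply]) ((hφ g v).const_smul c) }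
  exact ⟨MultilinearMap.mkContinuousLinear Φ C fun g v => le_of_tendsto (hφ g v).norm (hC g v), hφ⟩

end Limits

section ScriptL1

universe u

theorem norm_coe_uBall_le {X : Type*} [NormedAddCommGroup X] (x : UBall X) : ‖(x : X)‖ ≤ 1 :=
  mem_closedBall_zero_iff.1 x.2

variable {X : Type u} [NormedAddCommGroup X] [NormedSpace ℝ X] {lam : ℝ}

/-- `𝓛₁`-spaces with constant `lam`: every finite-dimensional subspace is contained in a
finite-dimensional subspace which is `lam`-isomorphic to `ℓ₁ⁿ`. The isomorphism is scaled so
that its inverse is a contraction. -/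
structure IsScriptL1Space (lam : ℝ) (X : Type*) [NormedAddCommGroup X] [NormedSpace ℝ X] :
    Prop where
  one_le : 1 ≤ lam
  exists_le_equiv : ∀ G : Submodule ℝ X, FiniteDimensional ℝ G →
    ∃ F : Submodule ℝ X, G ≤ F ∧ FiniteDimensional ℝ F ∧
      ∃ T : F ≃ₗ[ℝ] PiLp 1 (fun _ : Fin (Module.finrank ℝ F) => ℝ),
        ∀ v : F, ‖v‖ ≤ ‖T v‖ ∧ ‖T v‖ ≤ lam * ‖v‖

theorem IsScriptL1Space.exists_basis (hX : IsScriptL1Space lam X) (G : Submodule ℝ X)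
    [FiniteDimensional ℝ G] :
    ∃ (F : Submodule ℝ X) (n : ℕ) (b : Module.Basis (Fin n) ℝ F),
      G ≤ F ∧ (∀ i, ‖b i‖ ≤ 1) ∧ ∀ v, ∑ i, |b.repr v i| ≤ lam * ‖v‖ := by
  obtain ⟨F, hGF, -, T, hT⟩ := hX.exists_le_equiv G inferInstance
  let b := Module.Basis.ofEquivFun (T.trans (WithLp.linearEquiv 1 ℝ _))
  refine ⟨F, _, b, hGF, fun i => (hT (b i)).1.trans ?_, fun v => (hT v).2.trans' ?_⟩
  · have : T (b i) = PiLp.single 1 i (1 : ℝ) := by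
      ext j
      simp [b]
    simp [this]
  · simp [b, PiLp.norm_eq_of_L1]

theorem IsScriptL1Space.exists_l1_family (hX : IsScriptL1Space lam X)
    (hinf : ¬ FiniteDimensional ℝ X) (N : ℕ) :
    ∃ n ≥ N, ∃ y : Fin n → UBall X,
      ∀ a : Fin n → ℝ, ∑ i, |a i| ≤ lam * ‖∑ i, a i • (y i : X)‖ := by
  have hrank : (N : Cardinal) ≤ Module.rank ℝ X := Cardinal.natCast_le_aleph0.trans <| by
    rwa [← not_lt, Module.rank_lt_aleph0_iff]
  obtain ⟨t, rfl, hli⟩ := exists_finset_linearIndependent_of_le_rank hrank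
  obtain ⟨F, n, b, hGF, hb, hsum⟩ := hX.exists_basis (Submodule.span ℝ (t : Set X))
  have : FiniteDimensional ℝ F := b.finiteDimensional_of_finite
  have hcard : t.card ≤ n := by
    simpa [finrank_span_set_eq_card hli, Module.finrank_eq_card_basis b]
      using Submodule.finrank_mono hGF
  refine ⟨n, hcard, fun i => ⟨b i, mem_closedBall_zero_iff.2 (hb i)⟩, fun a => ?_⟩
  simpa [Finsupp.single_apply] using hsum (∑ i, a i • b i)

/-- Asymptotic coordinates on an `𝓛₁`-space: an ultrafilter along which every vector is eventually
recovered from its coordinates with respect to finite families in the unit ball, the `ℓ₁`-norm of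
the coordinates being controlled by the norm. -/
structure L1Coordinates (lam : ℝ) (X : Type u) [NormedAddCommGroup X] [NormedSpace ℝ X] where
  ι : Type u
  U : Ultrafilter ι
  dim : ι → ℕ
  coord : ∀ s, X →ₗ[ℝ] (Fin (dim s) → ℝ)
  vec : ∀ s, Fin (dim s) → UBall X
  sum_abs_coord_le : ∀ x, ∀ᶠ s in U, ∑ i, |coord s x i| ≤ lam * ‖x‖
  sum_coord_smul_vec : ∀ x, ∀ᶠ s in U, ∑ i, coord s x i • (vec s i : X) = x

theorem IsScriptL1Space.nonempty_l1Coordinates (hX : IsScriptL1Space lam X) :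
    Nonempty (L1Coordinates lam X) := by
  have hfd (s : Finset X) : FiniteDimensional ℝ (Submodule.span ℝ (s : Set X)) :=
    .span_finset ℝ s
  choose F d b hF hb hsum using fun s : Finset X =>
    hX.exists_basis (Submodule.span ℝ (s : Set X))
  choose coord hcoord using fun s => LinearMap.exists_extend (b s).equivFun.toLinearMap
  replace hcoord {s x} (hx : x ∈ F s) : coord s x = (b s).repr ⟨x, hx⟩ :=
    DFunLike.congr_fun (hcoord s) ⟨x, hx⟩
  let U : Ultrafilter (Finset X) := .of atTop
  have hmem (x : X) : ∀ᶠ s in U, x ∈ F s :=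
    Ultrafilter.of_le atTop <| (eventually_ge_atTop {x}).mono fun s hs =>
      hF s (Submodule.subset_span (hs (Finset.mem_singleton_self x)))
  exact ⟨{
    ι := Finset X
    U := U
    dim := d
    coord := coord
    vec := fun s i => ⟨b s i, mem_closedBall_zero_iff.2 (hb s i)⟩
    sum_abs_coord_le := fun x => (hmem x).mono fun s hs => by
      simp only [hcoord hs]
      exact hsum s ⟨x, hs⟩
    sum_coord_smul_vec := fun x => (hmem x).mono fun s hs => by
      simpa only [hcoord hs, map_sum, map_smul, Submodule.subtype_apply]
        using congrArg (F s).subtype ((b s).sum_repr ⟨x, hs⟩) }⟩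

theorem L1Coordinates.norm_le_sum_abs_coord (D : L1Coordinates lam X) (x : X) :
    ∀ᶠ s in D.U, ‖x‖ ≤ ∑ i, |D.coord s x i| := by
  filter_upwards [D.sum_coord_smul_vec x] with s hs
  calc ‖x‖ = ‖∑ i, D.coord s x i • (D.vec s i : X)‖ := by rw [hs]
    _ ≤ ∑ i, ‖D.coord s x i • (D.vec s i : X)‖ := norm_sum_le _ _
    _ ≤ ∑ i, |D.coord s x i| := Finset.sum_le_sum fun i _ => by
      rw [norm_smul]
      exact mul_le_of_le_one_right (norm_nonneg _) (norm_coe_uBall_le _)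

end ScriptL1

section Polynomials

universe u

variable {k : ℕ} {X : Type u} [NormedAddCommGroup X] [NormedSpace ℝ X] {lam : ℝ}

variable (k X) in
/-- The restriction to the unit ball of the `k`-homogeneous polynomial `x ↦ M(x, …, x)`. -/
def ballPoly : (X [×k]→L[ℝ] ℝ) →L[ℝ] ℓ^∞(UBall X, ℝ) :=
  linftyLift (fun x => ContinuousMultilinearMap.apply ℝ (fun _ : Fin k => X) ℝ fun _ => (x : X)) 1
    fun x => ContinuousLinearMap.opNorm_le_bound _ zero_le_one fun M =>
      (M.le_opNorm _).trans <| by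
        rw [one_mul]
        exact mul_le_of_le_one_right (norm_nonneg M)
          (Finset.prod_le_one (fun _ _ => norm_nonneg _) fun _ _ => norm_coe_uBall_le x)

/-- The averages `k⁻¹ ∑ ± vⱼ` at which a polynomial has to be evaluated for polarization. -/
def signedMean (v : Fin k → UBall X) (ε : Fin k → ℤˣ) : UBall X :=
  ⟨(k : ℝ)⁻¹ • ∑ j, ε j • (v j : X), mem_closedBall_zero_iff.2 <| by
    rw [norm_smul, norm_inv, RCLike.norm_natCast]
    refine inv_mul_le_one_of_le₀ ?_ k.cast_nonneg
    calc ‖∑ j, ε j • (v j : X)‖ ≤ ∑ _j : Fin k, (1 : ℝ) :=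
          norm_sum_le_of_le _ fun j _ => (norm_units_zsmul _ _).trans_le (norm_coe_uBall_le (v j))
      _ = k := by simp⟩

/-- The polarization formula, as a functional on bounded functions on the unit ball. -/
def polarize (v : Fin k → UBall X) : ℓ^∞(UBall X, ℝ) →L[ℝ] ℝ :=
  (k ^ k / (2 ^ k * k.factorial) : ℝ) • ∑ ε : Fin k → ℤˣ, (∏ j, ε j) • linftyEval (signedMean v ε)

theorem norm_polarize_le (v : Fin k → UBall X) : ‖polarize v‖ ≤ k ^ k / k.factorial := by
  calc ‖polarize v‖ ≤ (k ^ k / (2 ^ k * k.factorial) : ℝ) * ∑ _ε : Fin k → ℤˣ, 1 := by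
        rw [polarize, norm_smul, norm_of_nonneg (by positivity)]
        gcongr
        exact norm_sum_le_of_le _ fun ε _ => (norm_units_zsmul _ _).trans_le (norm_linftyEval_le _)
    _ = k ^ k / k.factorial := by
        simp only [Finset.sum_const, Finset.card_univ, card_signs, Fintype.card_fin, nsmul_eq_mul,
          Nat.cast_pow, Nat.cast_ofNat, mul_one]
        field_simp

theorem polarize_ballPoly (v : Fin k → UBall X) (M : X [×k]→L[ℝ] ℝ) :
    polarize v (ballPoly k X M) =
      (k.factorial : ℝ)⁻¹ * ∑ σ : Equiv.Perm (Fin k), M fun j => (v (σ j) : X) := by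
  have heval (ε : Fin k → ℤˣ) : ballPoly k X M (signedMean v ε) =
      ((k : ℝ) ^ k)⁻¹ • M fun _ => ∑ j, ε j • (v j : X) :=
    (M.map_smul_univ (fun _ => (k : ℝ)⁻¹) fun _ => ∑ j, ε j • (v j : X)).trans (by simp)
  have hpol : ∑ ε : Fin k → ℤˣ, (∏ j, ε j) • M (fun _ => ∑ j, ε j • (v j : X)) =
      2 ^ k * ∑ σ : Equiv.Perm (Fin k), M fun j => (v (σ j) : X) :=
    (sum_signs_polarization M.toMultilinearMap fun j => (v j : X)).trans <| by
      simp only [Fintype.card_fin, nsmul_eq_mul, Nat.cast_pow, Nat.cast_ofNat]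
      rfl
  have hk : (k : ℝ) ^ k ≠ 0 := by
    exact_mod_cast (Nat.pow_self_pos (n := k)).ne'
  have hsmul (ε : Fin k → ℤˣ) (t : ℝ) :
      (∏ j, ε j) • ((k : ℝ) ^ k)⁻¹ • t = ((k : ℝ) ^ k)⁻¹ • (∏ j, ε j) • t := smul_comm _ _ _
  simp only [polarize, smul_apply, sum_apply, linftyEval_apply, heval, hsmul, ← Finset.smul_sum,
    hpol]
  simp only [smul_eq_mul]
  field_simp

/-- The form obtained by polarizing a function on the unit ball at the vectors `D.vec s` and
extending multilinearly. -/
def L1Coordinates.form (D : L1Coordinates lam X) (k : ℕ) (s : D.ι) :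
    ℓ^∞(UBall X, ℝ) →ₗ[ℝ] MultilinearMap ℝ (fun _ : Fin k => X) ℝ :=
  ∑ r : Fin k → Fin (D.dim s), (polarize (D.vec s ∘ r)).toLinearMap.smulRight
    ((MultilinearMap.mkPiAlgebra ℝ (Fin k) ℝ).compLinearMap
      fun j => LinearMap.proj (r j) ∘ₗ D.coord s)

theorem L1Coordinates.form_apply (D : L1Coordinates lam X) (s : D.ι) (g : ℓ^∞(UBall X, ℝ))
    (v : Fin k → X) :
    D.form k s g v = ∑ r, polarize (D.vec s ∘ r) g * ∏ j, D.coord s (v j) (r j) := by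
  simp [form]

theorem L1Coordinates.norm_form_le (D : L1Coordinates lam X) (g : ℓ^∞(UBall X, ℝ))
    (v : Fin k → X) :
    ∀ᶠ s in D.U, ‖D.form k s g v‖ ≤ k ^ k / k.factorial * lam ^ k * ‖g‖ * ∏ j, ‖v j‖ := by
  filter_upwards [eventually_all.2 fun j => D.sum_abs_coord_le (v j)] with s hs
  calc ‖D.form k s g v‖
      ≤ ∑ r : Fin k → Fin (D.dim s), k ^ k / k.factorial * ‖g‖ * ∏ j, |D.coord s (v j) (r j)| := by
        rw [D.form_apply]
        refine norm_sum_le_of_le _ fun r _ => ?_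
        rw [norm_mul, norm_prod]
        exact mul_le_mul_of_nonneg_right
          ((polarize _).le_of_opNorm_le (norm_polarize_le _) g) (by positivity)
    _ = k ^ k / k.factorial * ‖g‖ * ∏ j, ∑ i, |D.coord s (v j) i| := by
        rw [← Finset.mul_sum, Finset.prod_univ_sum, Fintype.piFinset_univ]
    _ ≤ k ^ k / k.factorial * ‖g‖ * ∏ j, lam * ‖v j‖ := by
        gcongr with j
        exact hs j
    _ = k ^ k / k.factorial * lam ^ k * ‖g‖ * ∏ j, ‖v j‖ := by
        rw [Finset.prod_mul_distrib, Finset.prod_const, Finset.card_univ, Fintype.card_fin]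
        ring

theorem L1Coordinates.form_ballPoly (D : L1Coordinates lam X) (M : X [×k]→L[ℝ] ℝ) (x : X) :
    ∀ᶠ s in D.U, D.form k s (ballPoly k X M) (fun _ => x) = M fun _ => x := by
  filter_upwards [D.sum_coord_smul_vec x] with s hs
  let term (r : Fin k → Fin (D.dim s)) : ℝ :=
    M (fun j => (D.vec s (r j) : X)) * ∏ j, D.coord s x (r j)
  have hM : M (fun _ => x) = ∑ r, term r := by
    conv_lhs => rw [← hs]
    rw [M.map_sum]
    refine Finset.sum_congr rfl fun r _ => ?_
    rw [M.map_smul_univ, smul_eq_mul, mul_comm]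
  have hσ (σ : Equiv.Perm (Fin k)) : ∑ r, term (r ∘ σ) = ∑ r, term r :=
    (σ.symm.arrowCongr (.refl _)).sum_comp term
  have hterm (r : Fin k → Fin (D.dim s)) (σ : Equiv.Perm (Fin k)) :
      term (r ∘ σ) = M (fun j => (D.vec s (r (σ j)) : X)) * ∏ j, D.coord s x (r j) :=
    congrArg _ (Equiv.prod_comp σ fun j => D.coord s x (r j))
  calc D.form k s (ballPoly k X M) (fun _ => x)
      = (k.factorial : ℝ)⁻¹ * ∑ σ : Equiv.Perm (Fin k), ∑ r, term (r ∘ σ) := by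
        rw [D.form_apply, Finset.sum_comm, Finset.mul_sum]
        refine Finset.sum_congr rfl fun r _ => ?_
        simp only [hterm, polarize_ballPoly, Finset.sum_mul, mul_assoc, comp_apply]
    _ = M fun _ => x := by
        simp only [hσ, ← hM, Finset.sum_const, Finset.card_univ, Fintype.card_perm,
          Fintype.card_fin, nsmul_eq_mul]
        field_simp

theorem IsScriptL1Space.exists_extension (hX : IsScriptL1Space lam X) (k : ℕ) :
    ∃ S : ℓ^∞(UBall X, ℝ) →L[ℝ] X [×k]→L[ℝ] ℝ,
      ∀ M, ballPoly k X (S (ballPoly k X M)) = ballPoly k X M := by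
  obtain ⟨D⟩ := hX.nonempty_l1Coordinates
  obtain ⟨S, hS⟩ := exists_continuousMultilinearMap_tendsto (l := D.U) (D.form k) _ D.norm_form_le
    fun g v => exists_tendsto_ultrafilter_of_abs_le D.U (D.norm_form_le g v)
  exact ⟨S, fun M => lp.ext <| funext fun x => tendsto_nhds_unique (hS _ _) <|
    tendsto_const_nhds.congr' <| (D.form_ballPoly M x).mono fun _ h => h.symm⟩

end Polynomials

section Complementation

theorem exists_linfty_of_lipschitzWith {X : Type*} [NormedAddCommGroup X] {f : UBall X → ℝ}
    (hf : f (zeroB X) = 0) {L : NNReal} (hL : LipschitzWith L f) :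
    ∃ h : ℓ^∞(UBall X, ℝ), ⇑h = f ∧ ‖h‖ ≤ L := by
  have hbound (x : UBall X) : ‖f x‖ ≤ L := by
    calc ‖f x‖ = dist (f x) (f (zeroB X)) := by rw [hf, dist_zero_right]
      _ ≤ L * dist x (zeroB X) := hL.dist_le_mul x _
      _ ≤ L := mul_le_of_le_one_right L.2 x.2
  exact ⟨⟨f, memℓp_infty ⟨L, forall_mem_range.2 hbound⟩⟩, rfl,
    lp.norm_le_of_forall_le L.2 hbound⟩

variable {k : ℕ} {X : Type*} [NormedAddCommGroup X] [NormedSpace ℝ X]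

theorem lipschitzWith_ballPoly (M : X [×k]→L[ℝ] ℝ) : LipschitzWith (‖M‖₊ * k) (ballPoly k X M) :=
  LipschitzWith.of_dist_le_mul fun x y => by
    have hconst (z : X) : ‖fun _ : Fin k => z‖ ≤ ‖z‖ := pi_norm_const_le z
    have hmax : max ‖fun _ : Fin k => (x : X)‖ ‖fun _ : Fin k => (y : X)‖ ≤ 1 :=
      max_le ((hconst x).trans (norm_coe_uBall_le x)) ((hconst y).trans (norm_coe_uBall_le y))
    calc ‖M (fun _ => (x : X)) - M fun _ => (y : X)‖
        ≤ ‖M‖ * k * max ‖fun _ : Fin k => (x : X)‖ ‖fun _ : Fin k => (y : X)‖ ^ (k - 1) *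
            ‖fun _ : Fin k => (x - y : X)‖ := by
          simpa only [Fintype.card_fin, Pi.sub_def] using
            M.norm_image_sub_le (fun _ => (x : X)) fun _ => (y : X)
      _ ≤ ‖M‖ * k * 1 * ‖(x - y : X)‖ := by
          gcongr
          · exact pow_le_one₀ (by positivity) hmax
          · exact hconst _
      _ = (‖M‖₊ * k : NNReal) * dist x y := by
          rw [mul_one, Subtype.dist_eq, dist_eq_norm]
          rfl

theorem exists_projection_lip0B_phomB (S : ℓ^∞(UBall X, ℝ) →L[ℝ] X [×k]→L[ℝ] ℝ)
    (hS : ∀ M, ballPoly k X (S (ballPoly k X M)) = ballPoly k X M) :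
    ∃ (Q : (UBall X → ℝ) →ₗ[ℝ] (UBall X → ℝ)) (K : NNReal),
      (∀ f ∈ Lip0B X, Q f ∈ PhomB k X) ∧ (∀ f ∈ PhomB k X, Q f = f) ∧
      ∀ f ∈ Lip0B X, ∀ L : NNReal, LipschitzWith L f → LipschitzWith (K * L) (Q f) := by
  let coe : ℓ^∞(UBall X, ℝ) →ₗ[ℝ] (UBall X → ℝ) :=
    { toFun h := h
      map_add' _ _ := rfl
      map_smul' _ _ := rfl }
  obtain ⟨ρ, hρ⟩ := coe.exists_leftInverse_of_injective <|
    LinearMap.ker_eq_bot.2 fun _ _ => lp.ext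
  let Q := coe ∘ₗ (ballPoly k X ∘L S).toLinearMap ∘ₗ ρ
  have hQ (h : ℓ^∞(UBall X, ℝ)) : Q h = ballPoly k X (S h) :=
    congrArg (fun g => ⇑(ballPoly k X (S g))) (DFunLike.congr_fun hρ h)
  refine ⟨Q, ‖S‖₊ * k, ?_, ?_, ?_⟩
  · rintro f hf
    obtain ⟨L, hL⟩ := hf.1
    obtain ⟨h, rfl, -⟩ := exists_linfty_of_lipschitzWith hf.2 hL
    exact ⟨S h, congrFun (hQ h)⟩
  · rintro f ⟨M, hM⟩
    obtain rfl : f = ballPoly k X M := funext hM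
    rw [hQ, hS]
  · rintro f hf L hL
    obtain ⟨h, rfl, hh⟩ := exists_linfty_of_lipschitzWith hf.2 hL
    rw [hQ]
    refine (lipschitzWith_ballPoly (S h)).weaken ?_
    calc ‖S h‖₊ * k ≤ ‖S‖₊ * L * k := by
          gcongr
          exact S.le_of_opNorm_le_of_le le_rfl hh
      _ = ‖S‖₊ * k * L := mul_right_comm _ _ _

end Complementation

section Separable

theorem exists_linfty_extension_of_denseRange {I α : Type*} [TopologicalSpace α] {q : I → α}
    (hq : DenseRange q) :
    ∃ T : ℓ^∞(I, ℝ) →L[ℝ] ℓ^∞(α, ℝ),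
      ∀ f : ℓ^∞(α, ℝ), Continuous f → T (linftyComap q f) = f := by
  have hU (x : α) : ∃ U : Ultrafilter I, Tendsto q U (𝓝 x) := by
    have : (comap q (𝓝 x)).NeBot :=
      comap_neBot_iff_frequently.2 (mem_closure_iff_frequently.1 (hq x))
    exact ⟨.of (comap q (𝓝 x)), tendsto_iff_comap.2 (Ultrafilter.of_le _)⟩
  choose U hU using hU
  have hnorm (g : ℓ^∞(I, ℝ)) (i : I) : ‖g i‖ ≤ 1 * ‖g‖ :=
    (lp.norm_apply_le_norm ENNReal.top_ne_zero g i).trans_eq (one_mul _).symm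
  have hlim (x : α) : ∃ φ : ℓ^∞(I, ℝ) →L[ℝ] ℝ, ∀ g, Tendsto (fun i => g i) (U x) (𝓝 (φ g)) :=
    exists_continuousLinearMap_tendsto (l := (U x : Filter I))
      (fun i => (linftyEval i : ℓ^∞(I, ℝ) →L[ℝ] ℝ).toLinearMap) 1
      (fun g => Eventually.of_forall (hnorm g)) fun g =>
        exists_tendsto_ultrafilter_of_abs_le (U x) (C := 1 * ‖g‖) (Eventually.of_forall (hnorm g))
  choose φ hφ using hlim
  have hφ_norm (x : α) : ‖φ x‖ ≤ 1 := ContinuousLinearMap.opNorm_le_bound _ zero_le_one fun g =>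
    le_of_tendsto (hφ x g).norm (Eventually.of_forall (hnorm g))
  exact ⟨linftyLift φ 1 hφ_norm, fun f hf => lp.ext <| funext fun x =>
    tendsto_nhds_unique (hφ x (linftyComap q f)) ((hf.tendsto x).comp (hU x))⟩

variable {k : ℕ} {X : Type*} [NormedAddCommGroup X] [NormedSpace ℝ X]

theorem exists_leftInverse_to_linfty_nat [TopologicalSpace.SeparableSpace X]
    (S : ℓ^∞(UBall X, ℝ) →L[ℝ] X [×k]→L[ℝ] ℝ)
    (hS : ∀ M, ballPoly k X (S (ballPoly k X M)) = ballPoly k X M) :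
    ∃ (i : (ballPoly k X).range →L[ℝ] ℓ^∞(ℕ, ℝ)) (p : ℓ^∞(ℕ, ℝ) →L[ℝ] (ballPoly k X).range),
      LeftInverse p i := by
  have : Nonempty (UBall X) := ⟨zeroB X⟩
  have : SecondCountableTopology X := UniformSpace.secondCountable_of_separable X
  obtain ⟨T, hT⟩ :=
    exists_linfty_extension_of_denseRange (TopologicalSpace.denseRange_denseSeq (UBall X))
  refine ⟨linftyComap (TopologicalSpace.denseSeq (UBall X)) ∘L (ballPoly k X).range.subtypeL,
    (ballPoly k X ∘L S ∘L T).codRestrict _ fun g => LinearMap.mem_range_self _ _, ?_⟩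
  rintro ⟨_, M, rfl⟩
  refine Subtype.ext ?_
  have hM : T (linftyComap (TopologicalSpace.denseSeq (UBall X)) (ballPoly k X M)) =
      ballPoly k X M :=
    hT _ (lipschitzWith_ballPoly M).continuous
  exact (congrArg (fun g => ballPoly k X (S g)) hM).trans (hS M)

end Separable

section DominantMass

variable {ι κ μ : Type*} [Fintype ι] [Fintype κ] [Fintype μ]

open Classical in
/-- The `ℓ₁`-mass of `v` on the coordinates where it dominates all the `z m`, in the sense that
`|z m i| ≤ c * |v i|`. -/
def dominantMass (c : ℝ) (z : μ → ι → ℝ) (v : ι → ℝ) : ℝ :=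
  ∑ i with ∀ m, |z m i| ≤ c * |v i|, |v i|

theorem sum_signs_abs_le_add_sum_filter [DecidableEq κ] (a : κ → ℝ) (p : κ → Prop) [DecidablePred p]
    {w : ℝ} (hw : 0 ≤ w) (ha : ∀ j, ¬ p j → |a j| ≤ w) :
    ∑ ε : κ → ℤˣ, |∑ j, ε j • a j| ≤
      2 ^ Fintype.card κ * (√(Fintype.card κ) * w + ∑ j with p j, |a j|) := by
  let small (j : κ) : ℝ := if p j then 0 else a j
  have hsmall (j : κ) : |small j| ≤ w := by
    by_cases hj : p j <;> simp [small, hj, hw, ha]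
  have hsqrt : √(∑ j, small j ^ 2) ≤ √(Fintype.card κ) * w := by
    refine sqrt_le_iff.2 ⟨by positivity, ?_⟩
    calc ∑ j, small j ^ 2 ≤ ∑ _j : κ, w ^ 2 :=
          Finset.sum_le_sum fun j _ => sq_le_sq' (abs_le.1 (hsmall j)).1 (abs_le.1 (hsmall j)).2
      _ = (√(Fintype.card κ) * w) ^ 2 := by
          rw [mul_pow, sq_sqrt (Nat.cast_nonneg _)]
          simp
  have hsplit (ε : κ → ℤˣ) :
      |∑ j, ε j • a j| ≤ |∑ j, ε j • small j| + ∑ j with p j, |a j| := by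
    have : ∑ j, ε j • a j = ∑ j, ε j • small j + ∑ j with p j, ε j • a j := by
      rw [Finset.sum_filter, ← Finset.sum_add_distrib]
      refine Finset.sum_congr rfl fun j _ => ?_
      by_cases hj : p j <;> simp [small, hj]
    rw [this]
    refine (abs_add_le _ _).trans (add_le_add_right ?_ _)
    exact (Finset.abs_sum_le_sum_abs _ _).trans_eq
      (Finset.sum_congr rfl fun j _ => norm_units_zsmul (ε j) (a j))
  calc ∑ ε : κ → ℤˣ, |∑ j, ε j • a j|
      ≤ ∑ ε : κ → ℤˣ, (|∑ j, ε j • small j| + ∑ j with p j, |a j|) :=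
        Finset.sum_le_sum fun ε _ => hsplit ε
    _ ≤ 2 ^ Fintype.card κ * (√(∑ j, small j ^ 2)) + 2 ^ Fintype.card κ * ∑ j with p j, |a j| := by
        rw [Finset.sum_add_distrib]
        gcongr
        · exact sum_signs_abs_le small
        · simp
    _ ≤ _ := by
        rw [← mul_add]
        gcongr

theorem le_sum_dominantMass {c A : ℝ} (hc : 0 < c) (z : μ → ι → ℝ) (y : κ → ι → ℝ)
    (hA : ∀ ε : κ → ℤˣ, A ≤ ∑ i, |∑ j, ε j • y j i|) :
    A ≤ √(Fintype.card κ) * (c⁻¹ * ∑ m, ∑ i, |z m i|) + ∑ j, dominantMass c z (y j) := by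
  classical
  have hsmall (i : ι) (j : κ) (hj : ¬ ∀ m, |z m i| ≤ c * |y j i|) :
      |y j i| ≤ c⁻¹ * ∑ m, |z m i| := by
    push Not at hj
    obtain ⟨m, hm⟩ := hj
    rw [le_inv_mul_iff₀ hc]
    exact hm.le.trans (Finset.single_le_sum (fun m _ => abs_nonneg (z m i)) (Finset.mem_univ m))
  have hmul : (2 : ℝ) ^ Fintype.card κ * A ≤ 2 ^ Fintype.card κ *
      (√(Fintype.card κ) * (c⁻¹ * ∑ m, ∑ i, |z m i|) + ∑ j, dominantMass c z (y j)) := by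
    calc (2 : ℝ) ^ Fintype.card κ * A = ∑ _ε : κ → ℤˣ, A := by simp
      _ ≤ ∑ i, ∑ ε : κ → ℤˣ, |∑ j, ε j • y j i| := by
          rw [Finset.sum_comm]
          exact Finset.sum_le_sum fun ε _ => hA ε
      _ ≤ ∑ i, 2 ^ Fintype.card κ * (√(Fintype.card κ) * (c⁻¹ * ∑ m, |z m i|) +
            ∑ j with ∀ m, |z m i| ≤ c * |y j i|, |y j i|) :=
          Finset.sum_le_sum fun i _ =>
            sum_signs_abs_le_add_sum_filter _ _ (by positivity) (hsmall i)
      _ = _ := by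
          rw [← Finset.mul_sum, Finset.sum_add_distrib, ← Finset.mul_sum, ← Finset.mul_sum,
            Finset.sum_comm]
          simp only [dominantMass, Finset.sum_filter]
          rw [Finset.sum_comm (s := (Finset.univ : Finset ι)) (t := (Finset.univ : Finset κ))]
  exact le_of_mul_le_mul_left hmul (by positivity)

end DominantMass

section Biorthogonal

theorem exists_seq_of_forall_fin {α : Type*} {P : ∀ n, (Fin n → α) → α → Prop}
    (h : ∀ n v, ∃ y, P n v y) : ∃ x : ℕ → α, ∀ n, P n (fun m => x m) (x n) := by
  choose next hnext using h
  let x : ℕ → α := Nat.lt_wfRel.wf.fix fun n prev => next n fun m => prev m m.2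
  refine ⟨x, fun n => ?_⟩
  have hx : x n = next n fun m => x m := Nat.lt_wfRel.wf.fix_eq _ n
  rw [hx]
  exact hnext n _

theorem exists_sign_at_last (p : ℕ → Prop) (v : ℕ → ℝ) :
    ∃ u : ℕ → ℝ, (∀ t, ∑ n ∈ t, |u n| ≤ 1) ∧
      ∀ n, 0 ≤ u n * v n ∧ (p n → u n * v n = |v n| ∨ ∃ m, n < m ∧ p m) := by
  by_cases hlast : ∃ N, p N ∧ ∀ m, N < m → ¬ p m
  · obtain ⟨N, hN, hN_last⟩ := hlast
    refine ⟨Pi.single N (SignType.sign (v N) : ℝ), fun t => ?_, fun n => ?_⟩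
    · calc ∑ n ∈ t, |Pi.single N (SignType.sign (v N) : ℝ) n|
          = ∑ n ∈ t, Pi.single N |(SignType.sign (v N) : ℝ)| n := by
            simp only [Pi.single_apply, apply_ite abs, abs_zero]
        _ ≤ 1 := by
            rw [Finset.sum_pi_single']
            split_ifs
            · cases SignType.sign (v N) <;> simp
            · exact zero_le_one
    · rcases lt_trichotomy n N with h | rfl | h
      · exact ⟨by simp [h.ne], fun _ => .inr ⟨N, h, hN⟩⟩
      · simp
      · exact ⟨by simp [h.ne'], fun hn => absurd hn (hN_last n h)⟩
  · push Not at hlast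
    exact ⟨0, by simp, fun n => ⟨by simp, fun hn => .inr (hlast n hn)⟩⟩

/-- Each coordinate `i` goes to the last `n` such that `v n` dominates its predecessors there:
these predecessors are then small at `i`, so little of their dominant mass is lost. -/
theorem exists_disjoint_norming {ι : Type*} [Fintype ι] (v : ℕ → ι → ℝ) {c : ℕ → ℝ} {C : ℝ}
    (hv : ∀ n, ∑ i, |v n i| ≤ C) (hc : ∀ n, 0 ≤ c n) (hsum : Summable c) :
    ∃ u : ℕ → ι → ℝ, (∀ i t, ∑ n ∈ t, |u n i| ≤ 1) ∧
      ∀ n, dominantMass (c n) (fun m : Fin n => v m) (v n) ≤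
        ∑ i, u n i * v n i + C * ∑' m, c m := by
  choose u hu hlast using fun i =>
    exists_sign_at_last (fun n => ∀ m : Fin n, |v m i| ≤ c n * |v n i|) fun n => v n i
  refine ⟨fun n i => u i n, hu, fun n => ?_⟩
  have hterm (i m) : 0 ≤ c m * |v m i| := mul_nonneg (hc m) (abs_nonneg _)
  have hsummable (i : ι) : Summable fun m => c m * |v m i| :=
    (hsum.mul_right C).of_nonneg_of_le (hterm i) fun m => mul_le_mul_of_nonneg_left
      ((Finset.single_le_sum (fun i _ => abs_nonneg (v m i)) (Finset.mem_univ i)).trans (hv m))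
      (hc m)
  have hpoint (i : ι) (hi : ∀ m : Fin n, |v m i| ≤ c n * |v n i|) :
      |v n i| ≤ u i n * v n i + ∑' m, c m * |v m i| := by
    rcases (hlast i n).2 hi with h | ⟨m, hnm, hm⟩
    · exact h.symm.le.trans (le_add_of_nonneg_right (tsum_nonneg (hterm i)))
    · exact (hm ⟨n, hnm⟩).trans <| ((hsummable i).le_tsum m fun m _ => hterm i m).trans
        (le_add_of_nonneg_left (hlast i n).1)
  calc dominantMass (c n) (fun m : Fin n => v m) (v n)
      ≤ ∑ i, (u i n * v n i + ∑' m, c m * |v m i|) := by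
        rw [dominantMass]
        refine (Finset.sum_le_sum fun i hi => hpoint i (by simpa using hi)).trans ?_
        exact Finset.sum_le_univ_sum_of_nonneg fun i =>
          add_nonneg (hlast i n).1 (tsum_nonneg (hterm i))
    _ = ∑ i, u i n * v n i + ∑' m, c m * ∑ i, |v m i| := by
        rw [Finset.sum_add_distrib, ← Summable.tsum_finsetSum fun i _ => hsummable i]
        simp only [Finset.mul_sum]
    _ ≤ ∑ i, u i n * v n i + C * ∑' m, c m := by
        have hle (m) : c m * ∑ i, |v m i| ≤ C * c m := by
          rw [mul_comm C]
          exact mul_le_mul_of_nonneg_left (hv m) (hc m)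
        rw [← tsum_mul_left]
        refine add_le_add_right (Summable.tsum_le_tsum hle ?_ (hsum.mul_left C)) _
        simpa only [Finset.mul_sum] using summable_sum fun i _ => hsummable i

variable {X : Type*} [NormedAddCommGroup X] [NormedSpace ℝ X] {lam : ℝ}

theorem L1Coordinates.sum_abs_coord_uBall_le (D : L1Coordinates lam X) (hlam : 0 ≤ lam)
    (x : UBall X) : ∀ᶠ s in D.U, ∑ i, |D.coord s x i| ≤ lam :=
  (D.sum_abs_coord_le x).mono fun _ h =>
    h.trans (mul_le_of_le_one_right hlam (norm_coe_uBall_le x))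

theorem L1Coordinates.card_le_of_dominantMass_lt (D : L1Coordinates lam X) (hlam : 0 < lam)
    {n N : ℕ} (z : Fin n → UBall X) {y : Fin N → UBall X}
    (hy : ∀ a : Fin N → ℝ, ∑ j, |a j| ≤ lam * ‖∑ j, a j • (y j : X)‖) {c δ : ℝ} (hc : 0 < c)
    (hsmall : ∀ j, ∀ᶠ s in D.U,
      dominantMass c (fun m => D.coord s (z m)) (D.coord s (y j)) < δ) :
    N ≤ lam * (√N * (c⁻¹ * (n * lam)) + N * δ) := by
  obtain ⟨s, hs_small, hs_z, hs_norm⟩ := ((eventually_all.2 hsmall).and <|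
    (eventually_all.2 fun m => D.sum_abs_coord_uBall_le hlam.le (z m)).and <|
    eventually_all.2 fun ε : Fin N → ℤˣ => D.norm_le_sum_abs_coord (∑ j, ε j • (y j : X))).exists
  rw [← div_le_iff₀' hlam]
  have hsigns (ε : Fin N → ℤˣ) : (N : ℝ) / lam ≤ ∑ i, |∑ j, ε j • D.coord s (y j) i| := by
    have habs (j : Fin N) : |((ε j : ℤ) : ℝ)| = 1 := by
      rcases Int.units_eq_one_or (ε j) with h | h <;> simp [h]
    calc (N : ℝ) / lam = (∑ j, |((ε j : ℤ) : ℝ)|) / lam := by simp [habs]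
      _ ≤ ‖∑ j, ε j • (y j : X)‖ := by
          rw [div_le_iff₀' hlam]
          simpa only [Units.smul_def, Int.cast_smul_eq_zsmul] using hy fun j => ((ε j : ℤ) : ℝ)
      _ ≤ ∑ i, |∑ j, ε j • D.coord s (y j) i| := by
          simpa [Units.smul_def] using hs_norm ε
  calc (N : ℝ) / lam
      ≤ √N * (c⁻¹ * ∑ m, ∑ i, |D.coord s (z m) i|) +
          ∑ j, dominantMass c (fun m => D.coord s (z m)) (D.coord s (y j)) := by
        simpa only [Fintype.card_fin] using
          le_sum_dominantMass hc (fun m => D.coord s (z m)) (fun j => D.coord s (y j)) hsigns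
    _ ≤ √N * (c⁻¹ * ∑ _m : Fin n, lam) + ∑ _j : Fin N, δ := by
        gcongr with m _ j _
        · exact hs_z m
        · exact (hs_small j).le
    _ = √N * (c⁻¹ * (n * lam)) + N * δ := by simp

theorem L1Coordinates.exists_dominantMass_ge (D : L1Coordinates lam X)
    (hX : IsScriptL1Space lam X) (hinf : ¬ FiniteDimensional ℝ X) {n : ℕ} (z : Fin n → UBall X)
    {c : ℝ} (hc : 0 < c) :
    ∃ x : UBall X, ∀ᶠ s in D.U,
      1 / (2 * lam) ≤ dominantMass c (fun m => D.coord s (z m)) (D.coord s x) := by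
  have hlam : 0 < lam := zero_lt_one.trans_le hX.one_le
  by_contra! hsmall
  obtain ⟨N₀, hN₀⟩ := exists_nat_gt ((2 * lam * (c⁻¹ * (n * lam))) ^ 2)
  obtain ⟨N, hN, y, hy⟩ := hX.exists_l1_family hinf N₀
  have hsqrt : 2 * lam * (c⁻¹ * (n * lam)) < √N :=
    lt_sqrt_of_sq_lt (hN₀.trans_le (Nat.cast_le.2 hN))
  have hN_pos : 0 < √(N : ℝ) := lt_of_le_of_lt (by positivity) hsqrt
  refine hsqrt.not_ge (le_of_mul_le_mul_left ?_ hN_pos)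
  have hcard := D.card_le_of_dominantMass_lt hlam z hy hc fun j => hsmall (y j)
  have hhalf : lam * (N * (1 / (2 * lam))) = (N : ℝ) / 2 := by field_simp
  rw [mul_self_sqrt (Nat.cast_nonneg _)]
  linarith

theorem L1Coordinates.exists_functional (D : L1Coordinates lam X)
    (u : ∀ s, Fin (D.dim s) → ℝ) (hu : ∀ s i, |u s i| ≤ 1) :
    ∃ f : X →L[ℝ] ℝ, ∀ x, Tendsto (fun s => ∑ i, u s i * D.coord s x i) D.U (𝓝 (f x)) := by
  have hbound (x : X) : ∀ᶠ s in D.U, |∑ i, u s i * D.coord s x i| ≤ lam * ‖x‖ := by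
    filter_upwards [D.sum_abs_coord_le x] with s hs
    refine (Finset.abs_sum_le_sum_abs _ _).trans (hs.trans' (Finset.sum_le_sum fun i _ => ?_))
    rw [abs_mul]
    exact mul_le_of_le_one_left (abs_nonneg _) (hu s i)
  let Λ (s : D.ι) : X →ₗ[ℝ] ℝ := ∑ i, u s i • LinearMap.proj i ∘ₗ D.coord s
  have hΛ (s : D.ι) (x : X) : ∑ i, u s i * D.coord s x i = Λ s x := by simp [Λ]
  simp only [hΛ] at hbound ⊢
  exact exists_continuousLinearMap_tendsto Λ lam hbound fun x =>
    exists_tendsto_ultrafilter_of_abs_le D.U (hbound x)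

theorem L1Coordinates.exists_functionals (D : L1Coordinates lam X)
    (u : ∀ s, ℕ → Fin (D.dim s) → ℝ) (hu : ∀ s i t, ∑ n ∈ t, |u s n i| ≤ 1) :
    ∃ f : ℕ → X →L[ℝ] ℝ,
      (∀ n x, Tendsto (fun s => ∑ i, u s n i * D.coord s x i) D.U (𝓝 (f n x))) ∧
      ∀ x t, ∑ n ∈ t, |f n x| ≤ lam * ‖x‖ := by
  choose f hf using fun n => D.exists_functional (fun s => u s n) fun s i => by
    simpa using hu s i {n}
  refine ⟨f, hf, fun x t => le_of_tendsto (tendsto_finsetSum t fun n _ => (hf n x).abs) ?_⟩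
  filter_upwards [D.sum_abs_coord_le x] with s hs
  calc ∑ n ∈ t, |∑ i, u s n i * D.coord s x i|
      ≤ ∑ n ∈ t, ∑ i, |u s n i| * |D.coord s x i| := Finset.sum_le_sum fun n _ => by
        simpa only [abs_mul] using Finset.abs_sum_le_sum_abs (fun i => u s n i * D.coord s x i) _
    _ = ∑ i, (∑ n ∈ t, |u s n i|) * |D.coord s x i| := by
        rw [Finset.sum_comm]
        simp only [Finset.sum_mul]
    _ ≤ ∑ i, |D.coord s x i| := Finset.sum_le_sum fun i _ =>
        mul_le_of_le_one_left (abs_nonneg _) (hu s i t)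
    _ ≤ lam * ‖x‖ := hs

theorem IsScriptL1Space.exists_bounded_below_pairing (hX : IsScriptL1Space lam X)
    (hinf : ¬ FiniteDimensional ℝ X) :
    ∃ (f : ℕ → X →L[ℝ] ℝ) (x : ℕ → UBall X), (∀ n, 1 / (4 * lam) ≤ f n (x n)) ∧
      ∀ z t, ∑ n ∈ t, |f n z| ≤ lam * ‖z‖ := by
  classical
  obtain ⟨D⟩ := hX.nonempty_l1Coordinates
  have hlam : 0 < lam := zero_lt_one.trans_le hX.one_le
  let c (n : ℕ) : ℝ := 1 / (8 * lam ^ 2) * (1 / 2) ^ n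
  have hc (n : ℕ) : 0 < c n := by positivity
  have hc_sum : HasSum c (1 / (8 * lam ^ 2) * 2) := hasSum_geometric_two.mul_left _
  obtain ⟨x, hx⟩ := exists_seq_of_forall_fin
    fun n (z : Fin n → UBall X) => D.exists_dominantMass_ge hX hinf z (hc n)
  -- The bound on the coordinates of `x n` only holds eventually; elsewhere use `0`.
  let v (s : D.ι) (n : ℕ) : Fin (D.dim s) → ℝ :=
    if ∑ i, |D.coord s (x n) i| ≤ lam then D.coord s (x n) else 0
  have hv (n : ℕ) : ∀ᶠ s in D.U, v s n = D.coord s (x n) :=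
    (D.sum_abs_coord_uBall_le hlam.le (x n)).mono fun s hs => if_pos hs
  have hv_sum (s n) : ∑ i, |v s n i| ≤ lam := by
    by_cases h : ∑ i, |D.coord s (x n) i| ≤ lam <;> simp [v, h, hlam.le]
  choose u hu hu_mass using fun s =>
    exists_disjoint_norming (v s) (hv_sum s) (fun n => (hc n).le) hc_sum.summable
  obtain ⟨f, hf, hf_sum⟩ := D.exists_functionals u hu
  refine ⟨f, x, fun n => ge_of_tendsto (hf n (x n)) ?_, hf_sum⟩
  filter_upwards [hx n, hv n, eventually_all.2 fun m : Fin n => hv m] with s hs hvn hvm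
  have hmass := hu_mass s n
  simp only [hvn, hvm, hc_sum.tsum_eq] at hmass
  have htail : 1 / (2 * lam) - lam * (1 / (8 * lam ^ 2) * 2) = 1 / (4 * lam) := by
    field_simp
    norm_num
  linarith

theorem IsScriptL1Space.exists_biorthogonal (hX : IsScriptL1Space lam X)
    (hinf : ¬ FiniteDimensional ℝ X) :
    ∃ (f : ℕ → X →L[ℝ] ℝ) (x : ℕ → UBall X), (∀ n, f n (x n) = 1) ∧
      ∀ z t, ∑ n ∈ t, |f n z| ≤ 4 * lam ^ 2 * ‖z‖ := by
  obtain ⟨f, x, hfx, hf⟩ := hX.exists_bounded_below_pairing hinf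
  have hlam : 0 < lam := zero_lt_one.trans_le hX.one_le
  have hpos (n : ℕ) : 0 < f n (x n) := (hfx n).trans_lt' (by positivity)
  refine ⟨fun n => (f n (x n))⁻¹ • f n, x, fun n => inv_mul_cancel₀ (hpos n).ne', fun z t => ?_⟩
  calc ∑ n ∈ t, |(f n (x n))⁻¹ * f n z| ≤ ∑ n ∈ t, 4 * lam * |f n z| := by
        refine Finset.sum_le_sum fun n _ => ?_
        rw [abs_mul, abs_of_pos (inv_pos.2 (hpos n))]
        gcongr
        exact inv_le_of_inv_le₀ (by positivity) (by simpa using hfx n)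
    _ ≤ 4 * lam * (lam * ‖z‖) := by
        rw [← Finset.mul_sum]
        gcongr
        exact hf z t
    _ = 4 * lam ^ 2 * ‖z‖ := by ring

theorem IsScriptL1Space.exists_almost_biorthogonal (hX : IsScriptL1Space lam X)
    (hinf : ¬ FiniteDimensional ℝ X) {ε : ℝ} (hε : 0 < ε) :
    ∃ (f : ℕ → X →L[ℝ] ℝ) (x : ℕ → UBall X), (∀ n, f n (x n) = 1) ∧
      (∀ z t, ∑ n ∈ t, |f n z| ≤ 4 * lam ^ 2 * ‖z‖) ∧
      ∀ n t, n ∉ t → ∑ m ∈ t, |f m (x n)| ≤ ε := by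
  obtain ⟨f, x, hfx, hf⟩ := hX.exists_biorthogonal hinf
  obtain ⟨φ, hφ, hφ_sum⟩ := rosenthal_disjointification hε
    (fun n m => abs_nonneg (f m (x n))) fun n t =>
      (hf (x n) t).trans (mul_le_of_le_one_right (by positivity) (norm_coe_uBall_le (x n)))
  refine ⟨f ∘ φ, x ∘ φ, fun n => hfx (φ n), fun z t => ?_, hφ_sum⟩
  simpa using hf z (t.map ⟨φ, hφ⟩)

end Biorthogonal

section Retract

theorem exists_leftInverse_of_norm_one_sub_comp_lt {Y Z : Type*} [NormedAddCommGroup Y]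
    [NormedSpace ℝ Y] [NormedAddCommGroup Z] [NormedSpace ℝ Z] [CompleteSpace Z] {A : Z →L[ℝ] Y}
    {B : Y →L[ℝ] Z} (h : ‖1 - B ∘L A‖ < 1) : ∃ q : Y →L[ℝ] Z, LeftInverse q A := by
  obtain ⟨T, hT⟩ := isUnit_one_sub_of_norm_lt_one h
  rw [sub_sub_cancel] at hT
  refine ⟨(↑T⁻¹ : Z →L[ℝ] Z) ∘L B, fun z => ?_⟩
  have hinv : (↑T⁻¹ : Z →L[ℝ] Z) ∘L B ∘L A = 1 := by
    rw [← hT]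
    exact T.inv_mul
  exact DFunLike.congr_fun hinv z

variable {k : ℕ} {X : Type*} [NormedAddCommGroup X] [NormedSpace ℝ X]
  {f : ℕ → X →L[ℝ] ℝ} {C : ℝ}

theorem sum_abs_prod_le (hC : 0 ≤ C) (hf : ∀ z t, ∑ n ∈ t, |f n z| ≤ C * ‖z‖)
    (v : Fin (k + 1) → X) (t : Finset ℕ) :
    ∑ n ∈ t, |∏ j, f n (v j)| ≤ C ^ (k + 1) * ∏ j, ‖v j‖ := by
  have hle (n : ℕ) (z : X) : |f n z| ≤ C * ‖z‖ := by
    simpa using hf z {n}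
  calc ∑ n ∈ t, |∏ j, f n (v j)|
      ≤ ∑ n ∈ t, |f n (v 0)| * ∏ j : Fin k, C * ‖v j.succ‖ := by
        refine Finset.sum_le_sum fun n _ => ?_
        rw [Fin.prod_univ_succ, abs_mul, Finset.abs_prod]
        gcongr
        exact hle n _
    _ ≤ C * ‖v 0‖ * ∏ j : Fin k, C * ‖v j.succ‖ := by
        rw [← Finset.sum_mul]
        gcongr
        exact hf _ t
    _ = C ^ (k + 1) * ∏ j, ‖v j‖ := by
        rw [Fin.prod_univ_succ, Finset.prod_mul_distrib]
        simp only [Finset.prod_const, Finset.card_univ, Fintype.card_fin]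
        ring

theorem exists_diagonalForm (hC : 0 ≤ C) (hf : ∀ z t, ∑ n ∈ t, |f n z| ≤ C * ‖z‖) (k : ℕ) :
    ∃ A : ℓ^∞(ℕ, ℝ) →L[ℝ] X [×(k + 1)]→L[ℝ] ℝ,
      ∀ a v, HasSum (fun n => a n * ∏ j, f n (v j)) (A a v) := by
  let Λ (t : Finset ℕ) : ℓ^∞(ℕ, ℝ) →ₗ[ℝ] MultilinearMap ℝ (fun _ : Fin (k + 1) => X) ℝ :=
    ∑ n ∈ t, (linftyEval n).toLinearMap.smulRight
      ((MultilinearMap.mkPiAlgebra ℝ (Fin (k + 1)) ℝ).compLinearMap fun _ => (f n).toLinearMap)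
  have hΛ (t a v) : Λ t a v = ∑ n ∈ t, a n * ∏ j, f n (v j) := by simp [Λ]
  have hterm (a : ℓ^∞(ℕ, ℝ)) (v : Fin (k + 1) → X) (n : ℕ) :
      ‖a n * ∏ j, f n (v j)‖ ≤ ‖a‖ * |∏ j, f n (v j)| := by
    rw [norm_mul]
    exact mul_le_mul_of_nonneg_right (lp.norm_apply_le_norm ENNReal.top_ne_zero a n)
      (abs_nonneg _)
  have hbound (t a v) : ‖Λ t a v‖ ≤ C ^ (k + 1) * ‖a‖ * ∏ j, ‖v j‖ := by
    calc ‖Λ t a v‖ ≤ ∑ n ∈ t, ‖a‖ * |∏ j, f n (v j)| := by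
          rw [hΛ]
          exact norm_sum_le_of_le _ fun n _ => hterm a v n
      _ ≤ ‖a‖ * (C ^ (k + 1) * ∏ j, ‖v j‖) := by
          rw [← Finset.mul_sum]
          gcongr
          exact sum_abs_prod_le hC hf v t
      _ = _ := by ring
  have hsummable (a : ℓ^∞(ℕ, ℝ)) (v : Fin (k + 1) → X) :
      Summable fun n => a n * ∏ j, f n (v j) :=
    .of_norm_bounded ((summable_of_sum_le (fun _ => abs_nonneg _)
      (sum_abs_prod_le hC hf v)).mul_left ‖a‖) (hterm a v)
  obtain ⟨A, hA⟩ := exists_continuousMultilinearMap_tendsto (l := atTop) Λ _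
    (fun a v => .of_forall fun t => hbound t a v)
    fun a v => ⟨_, by simpa only [hΛ, HasSum, SummationFilter.unconditional_filter] using
      (hsummable a v).hasSum⟩
  exact ⟨A, fun a v => by
    simpa only [hΛ, HasSum, SummationFilter.unconditional_filter] using hA a v⟩

theorem abs_diagonal_sub_le {x : ℕ → UBall X} {ε : ℝ} (hC : 0 ≤ C)
    (hf : ∀ z t, ∑ n ∈ t, |f n z| ≤ C * ‖z‖) (hfx : ∀ n, f n (x n) = 1)
    (hoff : ∀ n t, n ∉ t → ∑ m ∈ t, |f m (x n)| ≤ ε) (a : ℓ^∞(ℕ, ℝ)) (n : ℕ) {S : ℝ}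
    (hS : HasSum (fun m => a m * f m (x n) ^ (k + 1)) S) :
    |S - a n| ≤ C ^ k * ε * ‖a‖ := by
  have hle (m : ℕ) : |f m (x n)| ≤ C := by
    simpa using (hf (x n) {m}).trans (mul_le_of_le_one_right hC (norm_coe_uBall_le (x n)))
  have htend : Tendsto (fun t => |∑ m ∈ t, a m * f m (x n) ^ (k + 1) - a n|) atTop
      (𝓝 |S - a n|) := by
    simpa only [HasSum, SummationFilter.unconditional_filter] using (hS.sub_const (a n)).abs
  refine le_of_tendsto htend ?_
  filter_upwards [eventually_ge_atTop {n}] with t ht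
  have hnt : n ∈ t := ht (Finset.mem_singleton_self n)
  calc |∑ m ∈ t, a m * f m (x n) ^ (k + 1) - a n|
      = |∑ m ∈ t.erase n, a m * f m (x n) ^ (k + 1)| := by
        rw [← Finset.add_sum_erase t _ hnt, hfx]
        simp
    _ ≤ ∑ m ∈ t.erase n, ‖a‖ * (C ^ k * |f m (x n)|) := by
        refine (Finset.abs_sum_le_sum_abs _ _).trans (Finset.sum_le_sum fun m _ => ?_)
        rw [abs_mul, abs_pow, pow_succ]
        gcongr
        · exact lp.norm_apply_le_norm ENNReal.top_ne_zero a m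
        · exact hle m
    _ ≤ ‖a‖ * (C ^ k * ε) := by
        rw [← Finset.mul_sum, ← Finset.mul_sum]
        gcongr
        exact hoff n _ (Finset.notMem_erase n t)
    _ = C ^ k * ε * ‖a‖ := mul_comm _ _

theorem IsScriptL1Space.exists_leftInverse_from_linfty {lam : ℝ} (hX : IsScriptL1Space lam X)
    (hinf : ¬ FiniteDimensional ℝ X) (k : ℕ) :
    ∃ (j : ℓ^∞(ℕ, ℝ) →L[ℝ] (ballPoly (k + 1) X).range)
      (q : (ballPoly (k + 1) X).range →L[ℝ] ℓ^∞(ℕ, ℝ)), LeftInverse q j := by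
  have hlam : 0 < lam := zero_lt_one.trans_le hX.one_le
  set C : ℝ := 4 * lam ^ 2
  have hC_pos : 0 < C := by positivity
  obtain ⟨f, x, hfx, hf, hoff⟩ :=
    hX.exists_almost_biorthogonal hinf (ε := 1 / (2 * C ^ k)) (by positivity)
  obtain ⟨A, hA⟩ := exists_diagonalForm hC_pos.le hf k
  let j : ℓ^∞(ℕ, ℝ) →L[ℝ] (ballPoly (k + 1) X).range :=
    (ballPoly (k + 1) X ∘L A).codRestrict _ fun a => LinearMap.mem_range_self _ (A a)
  let B : (ballPoly (k + 1) X).range →L[ℝ] ℓ^∞(ℕ, ℝ) :=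
    linftyComap x ∘L (ballPoly (k + 1) X).range.subtypeL
  refine ⟨j, exists_leftInverse_of_norm_one_sub_comp_lt (B := B) ?_⟩
  refine lt_of_le_of_lt (ContinuousLinearMap.opNorm_le_bound _ (by norm_num) fun a => ?_)
    one_half_lt_one
  refine lp.norm_le_of_forall_le (by positivity) fun n => ?_
  have hsum : HasSum (fun m => a m * f m (x n) ^ (k + 1)) (A a fun _ => (x n : X)) := by
    simpa using hA a fun _ => (x n : X)
  calc ‖a n - A a fun _ => (x n : X)‖ ≤ C ^ k * (1 / (2 * C ^ k)) * ‖a‖ := by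
        rw [norm_sub_rev]
        exact abs_diagonal_sub_le hC_pos.le hf hfx hoff a n hsum
    _ = 1 / 2 * ‖a‖ := by field_simp

end Retract

section Isomorphism

variable {k : ℕ} {X : Type*} [NormedAddCommGroup X] [NormedSpace ℝ X]

theorem PhomSub.eq_zero_of_eqOn_uBall {f : PhomSub k X}
    (hf : ∀ x : UBall X, (f : X → ℝ) x = 0) : f = 0 := by
  obtain ⟨M, hM⟩ := f.2
  refine Subtype.ext <| funext fun x => ?_
  let y : UBall X := ⟨(‖x‖ + 1)⁻¹ • x, mem_closedBall_zero_iff.2 <| by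
    rw [norm_smul, norm_inv, Real.norm_of_nonneg (by positivity : 0 ≤ ‖x‖ + 1),
      inv_mul_le_one₀ (by positivity)]
    exact le_add_of_nonneg_right zero_le_one⟩
  have hxy : x = (‖x‖ + 1) • (y : X) := (smul_inv_smul₀ (by positivity) x).symm
  calc (f : X → ℝ) x = (∏ _ : Fin k, (‖x‖ + 1)) • M fun _ => (y : X) := by
        rw [hM, ← M.map_smul_univ, ← hxy]
    _ = 0 := by rw [← hM, hf, smul_zero]

variable (k X) in
theorem exists_phomSub_equiv_range_ballPoly :
    ∃ J : PhomSub k X ≃ₗ[ℝ] (ballPoly k X).range, ∀ f, ‖J f‖ = supNormBall X f := by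
  have hrange (f : PhomSub k X) : ∃ g : (ballPoly k X).range,
      ∀ x, (g : ℓ^∞(UBall X, ℝ)) x = (f : X → ℝ) x := by
    obtain ⟨M, hM⟩ := f.2
    exact ⟨⟨ballPoly k X M, M, rfl⟩, fun x => (hM x).symm⟩
  choose r hr using hrange
  have hext {g h : (ballPoly k X).range}
      (hgh : ∀ x, (g : ℓ^∞(UBall X, ℝ)) x = (h : ℓ^∞(UBall X, ℝ)) x) : g = h :=
    Subtype.ext <| lp.ext <| funext hgh
  let R : PhomSub k X →ₗ[ℝ] (ballPoly k X).range :=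
    { toFun := r
      map_add' f g := hext fun x => by simp [hr]
      map_smul' c f := hext fun x => by simp [hr] }
  have hR (f : PhomSub k X) (x : UBall X) : (R f : ℓ^∞(UBall X, ℝ)) x = (f : X → ℝ) x := hr f x
  have hinj : Injective R := (injective_iff_map_eq_zero R).2 fun f hf =>
    PhomSub.eq_zero_of_eqOn_uBall fun x => by rw [← hR, hf]; rfl
  have hsurj : Surjective R := by
    rintro ⟨_, M, rfl⟩
    exact ⟨⟨fun x => M fun _ => x, M, fun _ => rfl⟩, hext (hR _)⟩
  have hbij : Bijective R := ⟨hinj, hsurj⟩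
  refine ⟨.ofBijective R hbij, fun f => ?_⟩
  rw [LinearEquiv.ofBijective_apply, supNormBall, sSup_image', Submodule.coe_norm,
    lp.norm_eq_ciSup]
  simp only [hR, Real.norm_eq_abs]

theorem IsScriptL1Space.nonempty_range_ballPoly_equiv [TopologicalSpace.SeparableSpace X]
    {lam : ℝ} (hX : IsScriptL1Space lam X) (hinf : ¬ FiniteDimensional ℝ X) (hk : 1 ≤ k) :
    Nonempty ((ballPoly k X).range ≃L[ℝ] ℓ^∞(ℕ, ℝ)) := by
  obtain ⟨S, hS⟩ := hX.exists_extension k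
  obtain ⟨i, p, hpi⟩ := exists_leftInverse_to_linfty_nat S hS
  obtain ⟨n, rfl⟩ := Nat.exists_eq_add_of_le' hk
  obtain ⟨j, q, hqj⟩ := hX.exists_leftInverse_from_linfty hinf n
  exact pelczynski_decomposition linftySelfEquiv hpi hqj

theorem exists_norm_bounds_of_equiv {V Y Z : Type*} [AddCommGroup V] [Module ℝ V]
    [NormedAddCommGroup Y] [NormedSpace ℝ Y] [NormedAddCommGroup Z] [NormedSpace ℝ Z] {N : V → ℝ}
    (J : V ≃ₗ[ℝ] Y) (hJ : ∀ v, ‖J v‖ = N v) (G : Y ≃L[ℝ] Z) :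
    ∃ e : V ≃ₗ[ℝ] Z, ∃ a b : ℝ, 0 < a ∧ ∀ v, a * N v ≤ ‖e v‖ ∧ ‖e v‖ ≤ b * N v := by
  let G' : Z →L[ℝ] Y := G.symm
  refine ⟨J.trans G.toLinearEquiv, (‖G'‖ + 1)⁻¹, ‖(G : Y →L[ℝ] Z)‖, by positivity,
    fun v => ?_⟩
  have hle : ‖G' (G (J v))‖ ≤ (‖G'‖ + 1) * ‖G (J v)‖ :=
    G'.le_of_opNorm_le (le_add_of_nonneg_right zero_le_one) _
  rw [← hJ, inv_mul_le_iff₀ (by positivity)]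
  exact ⟨by simpa [G'] using hle, (G : Y →L[ℝ] Z).le_opNorm (J v)⟩

end Isomorphism

theorem statement7_general (X : Type*) [NormedAddCommGroup X] [NormedSpace ℝ X]
    [TopologicalSpace.SeparableSpace X] (hinf : ¬ FiniteDimensional ℝ X) {lam : ℝ}
    (hX : IsScriptL1Space lam X) (k : ℕ) (hk : 1 ≤ k) :
    (∃ e : PhomSub k X ≃ₗ[ℝ] lp (fun _ : ℕ => ℝ) ⊤,
      ∃ a b : ℝ, 0 < a ∧
        ∀ f : PhomSub k X,
          a * supNormBall X (f : X → ℝ) ≤ ‖e f‖ ∧ ‖e f‖ ≤ b * supNormBall X (f : X → ℝ)) ∧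
    (∃ (Q : (↥(UBall X) → ℝ) →ₗ[ℝ] (↥(UBall X) → ℝ)) (K : NNReal),
      (∀ f ∈ Lip0B X, Q f ∈ PhomB k X) ∧ (∀ f ∈ PhomB k X, Q f = f) ∧
      (∀ f ∈ Lip0B X, ∀ L : NNReal, LipschitzWith L f → LipschitzWith (K * L) (Q f))) := by
  obtain ⟨J, hJ⟩ := exists_phomSub_equiv_range_ballPoly k X
  obtain ⟨G⟩ := hX.nonempty_range_ballPoly_equiv hinf hk
  obtain ⟨S, hS⟩ := hX.exists_extension k
  exact ⟨exists_norm_bounds_of_equiv J hJ G, exists_projection_lip0B_phomB S hS⟩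

/-- **Proposition 4.1 (Arias–Farmer / Aron–Schottenloher).** If `X` is an
infinite-dimensional separable `𝓛₁`-space, then for every `k ≥ 1` the space `P(ᵏX)` of
`k`-homogeneous polynomials on `X` is isomorphic, as a Banach space, to `ℓ∞`; in
particular `P(ᵏX)` is complemented in `Lip₀(B_X)`. -/
theorem statement7 (X : Type*) [NormedAddCommGroup X] [NormedSpace ℝ X] [CompleteSpace X]
    [TopologicalSpace.SeparableSpace X]
    (hinf : ¬ FiniteDimensional ℝ X)
    (lam : ℝ) (hlam : 1 ≤ lam)
    (hL1 : ∀ G : Submodule ℝ X, FiniteDimensional ℝ G →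
      ∃ F : Submodule ℝ X, G ≤ F ∧ FiniteDimensional ℝ F ∧
        ∃ T : F ≃ₗ[ℝ] PiLp 1 (fun _ : Fin (Module.finrank ℝ F) => ℝ),
          ∀ v : F, ‖v‖ ≤ ‖T v‖ ∧ ‖T v‖ ≤ lam * ‖v‖)
    (k : ℕ) (hk : 1 ≤ k) :
    (∃ e : PhomSub k X ≃ₗ[ℝ] lp (fun _ : ℕ => ℝ) ⊤,
      ∃ a b : ℝ, 0 < a ∧
        ∀ f : PhomSub k X,
          a * supNormBall X (f : X → ℝ) ≤ ‖e f‖ ∧ ‖e f‖ ≤ b * supNormBall X (f : X → ℝ)) ∧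
    (∃ (Q : (↥(UBall X) → ℝ) →ₗ[ℝ] (↥(UBall X) → ℝ)) (K : NNReal),
      (∀ f ∈ Lip0B X, Q f ∈ PhomB k X) ∧ (∀ f ∈ PhomB k X, Q f = f) ∧
      (∀ f ∈ Lip0B X, ∀ L : NNReal, LipschitzWith L f → LipschitzWith (K * L) (Q f))) := by
  exact statement7_general X hinf ⟨hlam, hL1⟩ k hk
end
end
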